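/- There exists a constant c_p > 0 depending only on p such that if ψ̂(0) ≥ c_p·‖ψ‖₂, then for every l ∈ ℕ there is a constant M_{p,l} > 0 (depending only on p, l and ψ) such that for all τ ≥ 0: ‖k̃(·,τ) − ũ(0,τ)‖_{C^l[0,2π]} ≤ M_{p,l}·e^{−(3p−1)τ}, where ũ(0,τ) = (1/2π)∫₀^{2π} k̃(θ,τ) dθ is regarded as a constant function of θ. -/

import Mathlib

open Real MeasureTheory Filter Set

/-- The `n`-th Fourier coefficient of a `2π`-periodic function `f : ℝ → ℝ`:
`f̂(n) = (1/2π) ∫₀^{2π} f(θ) e^{-inθ} dθ`. -/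
noncomputable def fCoeff (f : ℝ → ℝ) (n : ℤ) : ℂ :=
  (1 / (2 * Real.pi)) * ∫ θ in (0:ℝ)..(2 * Real.pi),
    (f θ : ℂ) * Complex.exp (-(Complex.I * n * θ))

/-- The seminorm `‖f‖₂ = max{sup_n n²|Re f̂(n)|, sup_n n²|Im f̂(n)|}`. -/
noncomputable def seminorm2 (f : ℝ → ℝ) : ℝ :=
  max (⨆ n : ℤ, (n : ℝ)^2 * |(fCoeff f n).re|)
      (⨆ n : ℤ, (n : ℝ)^2 * |(fCoeff f n).im|)

/-- The `C^l[0,2π]` norm: `max_{0 ≤ j ≤ l} sup_{θ ∈ [0,2π]} |f^{(j)}(θ)|`. -/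
noncomputable def ClNorm (l : ℕ) (f : ℝ → ℝ) : ℝ :=
  ⨆ j : Fin (l + 1), ⨆ θ : Set.Icc (0:ℝ) (2 * Real.pi),
    |iteratedDeriv (j : ℕ) f (θ : ℝ)|

/-- `k : ℝ × [0,T) → ℝ` is a smooth, `2π`-periodic (in space), strictly positive solution of the
`p`-curve shortening equation
`∂k/∂t = k²(k^{p-1} ∂²k/∂θ² + (p-1) k^{p-2} (∂k/∂θ)² + (1/p) k^p)`
with initial datum `ψ` (smooth, strictly positive, `2π`-periodic), blow-up time `T`
(i.e. `sup_θ k(θ,t) → ∞` as `t → T⁻`), such that `k(·,t)` is the curvature of a simple closed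
convex curve for each `t`, i.e. `∫₀^{2π} e^{iθ}/k(θ,t) dθ = 0`. -/
def IsPCSF (p : ℕ) (T : ℝ) (k : ℝ → ℝ → ℝ) (ψ : ℝ → ℝ) : Prop :=
  ContDiffOn ℝ (⊤ : ℕ∞) (fun q : ℝ × ℝ => k q.1 q.2) (Set.univ ×ˢ Set.Ico 0 T) ∧
  (∀ θ t, k (θ + 2 * Real.pi) t = k θ t) ∧
  (∀ θ : ℝ, ∀ t ∈ Set.Ico (0:ℝ) T, 0 < k θ t) ∧
  (∀ θ : ℝ, ∀ t ∈ Set.Ico (0:ℝ) T,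
    HasDerivAt (fun s => k θ s)
      ((k θ t)^2 * ((k θ t)^(p - 1) * deriv (deriv (fun x => k x t)) θ
        + ((p : ℝ) - 1) * (k θ t)^(p - 2) * (deriv (fun x => k x t) θ)^2
        + (1 / (p : ℝ)) * (k θ t)^p)) t) ∧
  (∀ θ, k θ 0 = ψ θ) ∧
  ContDiff ℝ (⊤ : ℕ∞) ψ ∧ (∀ θ, 0 < ψ θ) ∧ (∀ θ, ψ (θ + 2 * Real.pi) = ψ θ) ∧
  Filter.Tendsto (fun t => ⨆ θ : Set.Icc (0:ℝ) (2 * Real.pi), k (θ : ℝ) t)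
    (nhdsWithin T (Set.Iio T)) Filter.atTop ∧
  (∀ t ∈ Set.Ico (0:ℝ) T,
    (∫ θ in (0:ℝ)..(2 * Real.pi), Complex.exp (Complex.I * θ) / (k θ t)) = 0)

/-- The original time `t` corresponding to the rescaled time `τ`:
`t = T(1 - e^{-(p+1)τ})`, i.e. `τ = -(1/(p+1))·log(1 - t/T)`. -/
noncomputable def tOf (p : ℕ) (T τ : ℝ) : ℝ := T * (1 - Real.exp (-((p : ℝ) + 1) * τ))

/-- The normalized curvature `k̃(θ,τ) = ((p+1)/p)^{1/(p+1)} (T-t)^{1/(p+1)} k(θ,t)`,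
with `t = T(1 - e^{-(p+1)τ})`. -/
noncomputable def ktilde (p : ℕ) (T : ℝ) (k : ℝ → ℝ → ℝ) (θ τ : ℝ) : ℝ :=
  (((p : ℝ) + 1) / (p : ℝ)) ^ ((1 : ℝ) / ((p : ℝ) + 1))
    * (T - tOf p T τ) ^ ((1 : ℝ) / ((p : ℝ) + 1)) * k θ (tOf p T τ)

/-- smooth `2π`-periodic functions -/
def SP (f : ℝ → ℝ) : Prop := ContDiff ℝ (⊤ : ℕ∞) f ∧ ∀ x, f (x + 2 * Real.pi) = f x

/-- the energy of order `j` -/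
noncomputable def en (j : ℕ) (f : ℝ → ℝ) : ℝ :=
  ∫ x in (0:ℝ)..(2 * Real.pi), (iteratedDeriv j f x)^2

lemma SP.deriv {f : ℝ → ℝ} (hf : SP f) : SP (deriv f) := by
  refine ⟨hf.1.deriv' , fun x => ?_⟩
  have : (fun x => f (x + 2 * Real.pi)) = f := funext hf.2
  rw [← deriv_comp_add_const, this]

lemma SP.iter {f : ℝ → ℝ} (hf : SP f) (j : ℕ) : SP (iteratedDeriv j f) := by
  induction j with
  | zero => simpa [iteratedDeriv_zero] using hf
  | succ n ih => rw [iteratedDeriv_succ]; exact ih.deriv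

lemma SP.cont {f : ℝ → ℝ} (hf : SP f) : Continuous f := hf.1.continuous

lemma SP.hasDeriv {f : ℝ → ℝ} (hf : SP f) (x : ℝ) : HasDerivAt f (_root_.deriv f x) x :=
  ((hf.1.differentiable (by simp)) x).hasDerivAt

lemma SP.hasDeriv_iter {f : ℝ → ℝ} (hf : SP f) (j : ℕ) (x : ℝ) :
    HasDerivAt (iteratedDeriv j f) (iteratedDeriv (j+1) f x) x := by
  rw [iteratedDeriv_succ]; exact (hf.iter j).hasDeriv x

lemma SP.mul {f g : ℝ → ℝ} (hf : SP f) (hg : SP g) : SP (fun x => f x * g x) :=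
  ⟨hf.1.mul hg.1, fun x => by simp only [hf.2, hg.2]⟩

lemma SP.pow {f : ℝ → ℝ} (hf : SP f) (n : ℕ) : SP (fun x => f x ^ n) :=
  ⟨hf.1.pow n, fun x => by simp only [hf.2]⟩

lemma SP.inv {f : ℝ → ℝ} (hf : SP f) (h0 : ∀ x, 0 < f x) : SP (fun x => (f x)⁻¹) :=
  ⟨hf.1.inv (fun x => (h0 x).ne'), fun x => by simp only [hf.2]⟩

lemma SP.ii {f : ℝ → ℝ} (hf : SP f) (a b : ℝ) : IntervalIntegrable f volume a b :=
  hf.cont.intervalIntegrable a b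

lemma ibp {f g : ℝ → ℝ} (hf : SP f) (hg : SP g) :
    ∫ x in (0:ℝ)..(2 * Real.pi), f x * deriv g x
      = - ∫ x in (0:ℝ)..(2 * Real.pi), deriv f x * g x := by
  rw [intervalIntegral.integral_mul_deriv_eq_deriv_mul (u' := deriv f)
    (fun x _ => hf.hasDeriv x) (fun x _ => hg.hasDeriv x) (hf.deriv.ii _ _) (hg.deriv.ii _ _)]
  have h1 := hf.2 0
  have h2 := hg.2 0
  rw [zero_add] at h1 h2
  rw [h1, h2]; ring

lemma int_deriv {f : ℝ → ℝ} (hf : SP f) : ∫ x in (0:ℝ)..(2 * Real.pi), deriv f x = 0 := by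
  rw [intervalIntegral.integral_eq_sub_of_hasDerivAt (fun x _ => hf.hasDeriv x) (hf.deriv.ii _ _)]
  have h1 := hf.2 0
  rw [zero_add] at h1
  rw [h1]; ring

lemma tp : (0:ℝ) ≤ 2 * Real.pi := by positivity

/-- Cauchy-Schwarz -/
lemma cs {f g : ℝ → ℝ} (hf : Continuous f) (hg : Continuous g) :
    (∫ x in (0:ℝ)..(2 * Real.pi), f x * g x)^2
      ≤ (∫ x in (0:ℝ)..(2 * Real.pi), f x ^ 2) * ∫ x in (0:ℝ)..(2 * Real.pi), g x ^ 2 := by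
  set a := ∫ x in (0:ℝ)..(2 * Real.pi), f x ^ 2
  set b := ∫ x in (0:ℝ)..(2 * Real.pi), f x * g x
  set c := ∫ x in (0:ℝ)..(2 * Real.pi), g x ^ 2
  have key : ∀ t : ℝ, 0 ≤ a * (t * t) + (2 * b) * t + c := by
    intro t
    have : a * (t * t) + (2 * b) * t + c
        = ∫ x in (0:ℝ)..(2 * Real.pi), (t * f x + g x)^2 := by
      have e : (fun x => (t * f x + g x)^2)
          = fun x => (t*t) * f x ^ 2 + (2 * t) * (f x * g x) + g x ^ 2 := by
        funext x; ring
      rw [e, intervalIntegral.integral_add, intervalIntegral.integral_add,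
        intervalIntegral.integral_const_mul, intervalIntegral.integral_const_mul]
      · ring
      all_goals exact Continuous.intervalIntegrable (by fun_prop) _ _
    rw [this]
    exact intervalIntegral.integral_nonneg tp (fun x _ => sq_nonneg _)
  have := discrim_le_zero key
  unfold discrim at this
  nlinarith

lemma en_nonneg (j : ℕ) (f : ℝ → ℝ) : 0 ≤ en j f :=
  intervalIntegral.integral_nonneg tp (fun x _ => sq_nonneg _)

lemma osc {f : ℝ → ℝ} (hf : SP f) (x y : ℝ) :
    |f x - f y| ≤ ∫ x in (0:ℝ)..(2 * Real.pi), |deriv f x| := by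
  have per : Function.Periodic f (2 * Real.pi) := hf.2
  obtain ⟨x', hx', ex⟩ := per.exists_mem_Ico₀ (by positivity) x
  obtain ⟨y', hy', ey⟩ := per.exists_mem_Ico₀ (by positivity) y
  rw [ex, ey]
  have h : ∀ a ∈ Ico (0:ℝ) (2 * Real.pi), ∀ b ∈ Ico (0:ℝ) (2 * Real.pi), a ≤ b →
      |f b - f a| ≤ ∫ x in (0:ℝ)..(2 * Real.pi), |deriv f x| := by
    intro a ha b hb hab
    rw [← intervalIntegral.integral_eq_sub_of_hasDerivAt (fun x _ => hf.hasDeriv x)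
      (hf.deriv.ii a b)]
    refine (intervalIntegral.abs_integral_le_integral_abs hab).trans ?_
    refine intervalIntegral.integral_mono_interval ha.1 hab hb.2.le ?_ ?_
    · exact Filter.Eventually.of_forall (fun x => abs_nonneg _)
    · exact (hf.deriv.cont.abs).intervalIntegrable _ _
  rcases le_total x' y' with h1 | h1
  · rw [abs_sub_comm]; exact h _ hx' _ hy' h1
  · exact h _ hy' _ hx' h1

lemma int_abs_sq {f : ℝ → ℝ} (hf : Continuous f) :
    (∫ x in (0:ℝ)..(2 * Real.pi), |f x|)^2
      ≤ 2 * Real.pi * ∫ x in (0:ℝ)..(2 * Real.pi), (f x)^2 := by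
  have := cs (f := fun _ => 1) (g := fun x => |f x|) continuous_const hf.abs
  simpa using this

lemma osc_sq {f : ℝ → ℝ} (hf : SP f) (x y : ℝ) : (f x - f y)^2 ≤ 2 * Real.pi * en 1 f := by
  have h := osc hf x y
  have h2 := int_abs_sq hf.deriv.cont
  have e : en 1 f = ∫ x in (0:ℝ)..(2 * Real.pi), (deriv f x)^2 := by
    simp [en, iteratedDeriv_one]
  rw [e]
  calc (f x - f y)^2 = |f x - f y|^2 := (sq_abs _).symm
    _ ≤ _ := (pow_le_pow_left₀ (abs_nonneg _) h 2).trans h2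

lemma en_iter (i j : ℕ) (f : ℝ → ℝ) : en i (iteratedDeriv j f) = en (i + j) f := by
  simp only [en]
  have : iteratedDeriv i (iteratedDeriv j f) = iteratedDeriv (i+j) f := by
    simp only [iteratedDeriv_eq_iterate, ← Function.iterate_add_apply]
  rw [this]

lemma exists_zero {f : ℝ → ℝ} (hf : SP f) {j : ℕ} (hj : 1 ≤ j) :
    ∃ x, iteratedDeriv j f x = 0 := by
  obtain ⟨i, rfl⟩ : ∃ i, j = i + 1 := ⟨j - 1, by omega⟩
  have h1 := (hf.iter i).2 0
  rw [zero_add] at h1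
  obtain ⟨c, _, hc⟩ := exists_deriv_eq_zero (f := iteratedDeriv i f) (a := 0) (b := 2 * Real.pi)
    (by positivity) (hf.iter i).cont.continuousOn h1.symm
  exact ⟨c, by rw [iteratedDeriv_succ]; exact hc⟩

lemma sup_sq {f : ℝ → ℝ} (hf : SP f) {j : ℕ} (hj : 1 ≤ j) (x : ℝ) :
    (iteratedDeriv j f x)^2 ≤ 2 * Real.pi * en (j+1) f := by
  obtain ⟨c, hc⟩ := exists_zero hf hj
  have := osc_sq (hf.iter j) x c
  rw [hc, sub_zero, en_iter, add_comm 1 j] at this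
  exact this

lemma sup_four {f : ℝ → ℝ} (hf : SP f) {j : ℕ} (hj : 1 ≤ j) (x : ℝ) :
    (iteratedDeriv j f x)^4 ≤ 4 * en j f * en (j+1) f := by
  obtain ⟨c, hc⟩ := exists_zero hf hj
  have hg := hf.iter j
  have h := osc (hg.pow 2) x c
  have e : ∀ y, deriv (fun x => iteratedDeriv j f x ^ 2) y
      = 2 * (iteratedDeriv j f y * iteratedDeriv (j+1) f y) := by
    intro y
    rw [((hf.hasDeriv_iter j y).fun_pow 2).deriv]; simp; ring
  simp only [e, hc] at h
  have h3 : (∫ x in (0:ℝ)..(2 * Real.pi), |2 * (iteratedDeriv j f x * iteratedDeriv (j+1) f x)|)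
      = 2 * ∫ x in (0:ℝ)..(2 * Real.pi), |iteratedDeriv j f x| * |iteratedDeriv (j+1) f x| := by
    rw [← intervalIntegral.integral_const_mul]
    simp only [abs_mul, abs_two]
  have h2 := cs hg.cont.abs (hf.iter (j+1)).cont.abs
  simp only [sq_abs] at h2
  rw [h3] at h
  simp only [ne_eq, OfNat.ofNat_ne_zero, not_false_eq_true, zero_pow, sub_zero] at h
  have h4 : |iteratedDeriv j f x ^ 2|^2 = (iteratedDeriv j f x)^4 := by rw [sq_abs]; ring
  rw [← h4]
  refine (pow_le_pow_left₀ (abs_nonneg _) h 2).trans ?_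
  unfold en
  nlinarith

lemma en_succ {f : ℝ → ℝ} (hf : SP f) {j : ℕ} {η : ℝ} (hη : 0 < η) :
    en (j+1) f ≤ η * en (j+2) f + η⁻¹ * en j f := by
  have h1 : en (j+1) f = - ∫ x in (0:ℝ)..(2 * Real.pi),
      iteratedDeriv j f x * iteratedDeriv (j+2) f x := by
    have := ibp (hf.iter j) (hf.iter (j+1))
    simp only [← iteratedDeriv_succ] at this
    rw [this, neg_neg]
    unfold en
    congr 1; funext x; ring
  have hc := cs (hf.iter j).cont (hf.iter (j+2)).cont
  have hn1 := en_nonneg j f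
  have hn2 := en_nonneg (j+2) f
  have hn := en_nonneg (j+1) f
  change _ ≤ en j f * en (j+2) f at hc
  rw [← neg_sq, ← h1] at hc
  refine abs_le_of_sq_le_sq' (a := en (j+1) f) ?_ (by positivity) |>.2
  have : η * η⁻¹ = 1 := mul_inv_cancel₀ hη.ne'
  nlinarith [sq_nonneg (η * en (j+2) f - η⁻¹ * en j f), mul_nonneg hn1 hn2]

lemma interp (j : ℕ) : ∀ η : ℝ, 0 < η → ∃ C : ℝ, 0 ≤ C ∧ ∀ f : ℝ → ℝ, SP f →
    en (j+1) f ≤ η * en (j+2) f + C * en 1 f := by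
  induction j with
  | zero =>
    intro η hη
    refine ⟨1, zero_le_one, fun f hf => ?_⟩
    have := mul_nonneg hη.le (en_nonneg 2 f)
    simp only [zero_add]
    linarith
  | succ j ih =>
    intro η hη
    obtain ⟨C, hC, h⟩ := ih (η / 4) (by positivity)
    refine ⟨2 * ((η / 2)⁻¹ * C), by positivity, fun f hf => ?_⟩
    have h1 := en_succ hf (j := j+1) (η := η/2) (by positivity)
    have h2 := h f hf
    have h3 := mul_le_mul_of_nonneg_left h2 (by positivity : 0 ≤ (η/2)⁻¹)
    have h4 : (η/2)⁻¹ * (η/4 * en (j+2) f + C * en 1 f)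
      = 1/2 * en (j+2) f + (η/2)⁻¹ * C * en 1 f := by
      field_simp; ring
    rw [h4] at h3
    simp only [add_assoc] at *
    norm_num at *
    linarith

lemma interp_le {i l : ℕ} (hi : 1 ≤ i) (hil : i ≤ l) : ∀ η : ℝ, 0 < η → ∃ C : ℝ, 0 ≤ C ∧
    ∀ f : ℝ → ℝ, SP f → en i f ≤ η * en (l+1) f + C * en 1 f := by
  induction l, hil using Nat.le_induction with
  | base =>
    obtain ⟨j, rfl⟩ : ∃ j, i = j + 1 := ⟨i - 1, by omega⟩
    exact interp j
  | succ l hl ih =>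
    intro η hη
    obtain ⟨C, hC, h⟩ := ih 1 one_pos
    obtain ⟨C', hC', h'⟩ := interp l η hη
    refine ⟨C' + C, by positivity, fun f hf => ?_⟩
    have h1 := h f hf
    have h2 := h' f hf
    simp only [add_assoc] at *
    norm_num at *
    linarith

/-- sum of absolute values of the derivatives of orders `1..i` -/
noncomputable def sg (r : ℝ → ℝ) (i : ℕ) (x : ℝ) : ℝ :=
  ∑ j ∈ Finset.Icc 1 i, |iteratedDeriv j r x|

lemma sg_nonneg (r : ℝ → ℝ) (i : ℕ) (x : ℝ) : 0 ≤ sg r i x :=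
  Finset.sum_nonneg (fun _ _ => abs_nonneg _)

lemma le_sg (r : ℝ → ℝ) {i j : ℕ} (h1 : 1 ≤ j) (h2 : j ≤ i) (x : ℝ) :
    |iteratedDeriv j r x| ≤ sg r i x :=
  Finset.single_le_sum (f := fun j => |iteratedDeriv j r x|) (fun _ _ => abs_nonneg _)
    (Finset.mem_Icc.2 ⟨h1, h2⟩)

lemma sg_mono (r : ℝ → ℝ) {i j : ℕ} (h : i ≤ j) (x : ℝ) : sg r i x ≤ sg r j x :=
  Finset.sum_le_sum_of_subset_of_nonneg (Finset.Icc_subset_Icc_right h)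
    (fun _ _ _ => abs_nonneg _)

lemma sg_le (r : ℝ → ℝ) {i : ℕ} {B x : ℝ}
    (h : ∀ j, 1 ≤ j → j ≤ i → |iteratedDeriv j r x| ≤ B) : sg r i x ≤ i * B := by
  have := Finset.sum_le_card_nsmul (Finset.Icc 1 i) (fun j => |iteratedDeriv j r x|) B
    (fun j hj => h j (Finset.mem_Icc.1 hj).1 (Finset.mem_Icc.1 hj).2)
  simpa [sg] using this

lemma sg_succ (r : ℝ → ℝ) (i : ℕ) (x : ℝ) :
    sg r (i+1) x = sg r i x + |iteratedDeriv (i+1) r x| := by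
  unfold sg; rw [Finset.sum_Icc_succ_top (by omega)]

lemma sg_sq (r : ℝ → ℝ) (i : ℕ) (x : ℝ) :
    (sg r i x)^2 ≤ i * ∑ j ∈ Finset.Icc 1 i, (iteratedDeriv j r x)^2 := by
  have := sq_sum_le_card_mul_sum_sq (s := Finset.Icc 1 i) (f := fun j => |iteratedDeriv j r x|)
  simpa [sg] using this

/-- derivative of powers of the inverse -/
lemma deriv_upow {r : ℝ → ℝ} (hr : SP r) (h0 : ∀ x, 0 < r x) (n : ℕ) :
    deriv (fun x => (r x)⁻¹ ^ n) = fun x => (-(n:ℝ)) * ((r x)⁻¹ ^ (n+1) * deriv r x) := by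
  funext x
  have h := ((hr.hasDeriv x).fun_inv (h0 x).ne').fun_pow n
  rw [h.deriv]
  have := (h0 x).ne'
  rcases n with _ | n
  · simp
  · simp only [Nat.add_sub_cancel, inv_pow]
    field_simp; ring

lemma iter_upow {r : ℝ → ℝ} (hr : SP r) (h0 : ∀ x, 0 < r x) (n i : ℕ) (x : ℝ) :
    iteratedDeriv (i+1) (fun x => (r x)⁻¹ ^ n) x = (-(n:ℝ)) * ∑ s ∈ Finset.range (i+1),
      (i.choose s : ℝ) * iteratedDeriv s (fun x => (r x)⁻¹ ^ (n+1)) x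
        * iteratedDeriv (i + 1 - s) r x := by
  rw [iteratedDeriv_succ', deriv_upow hr h0]
  have hu := (hr.inv h0).pow (n+1)
  have h1 : ContDiffAt ℝ i (fun x => (r x)⁻¹ ^ (n+1)) x :=
    (hu.1.contDiffAt).of_le (by exact_mod_cast le_top)
  have h2 : ContDiffAt ℝ i (deriv r) x :=
    (hr.deriv.1.contDiffAt).of_le (by exact_mod_cast le_top)
  rw [iteratedDeriv_const_mul_field, iteratedDeriv_fun_mul h1 h2]
  congr 1
  refine Finset.sum_congr rfl (fun s hs => ?_)
  have : i + 1 - s = (i - s) + 1 := by have := Finset.mem_range.1 hs; omega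
  rw [this, iteratedDeriv_succ']

/-- composition estimate -/
lemma compA {N : ℕ} (hN : 1 ≤ N) {B U : ℝ} (hB : 0 ≤ B) (hU : 0 ≤ U) (i : ℕ) :
    i ≤ N + 2 → ∀ n : ℕ, ∃ C : ℝ, 0 ≤ C ∧ ∀ r : ℝ → ℝ, SP r → (∀ x, 0 < r x) →
      (∀ x, (r x)⁻¹ ≤ U) → (∀ j, 1 ≤ j → j ≤ N → ∀ x, |iteratedDeriv j r x| ≤ B) →
      (∀ x, |iteratedDeriv i (fun x => (r x)⁻¹ ^ n) x| ≤ C * (1 + sg r i x)) ∧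
      (1 ≤ i → ∀ x, |iteratedDeriv i (fun x => (r x)⁻¹ ^ n) x| ≤ C * sg r i x) := by
  induction i using Nat.strong_induction_on with
  | _ i ih =>
  intro hi n
  rcases i with _ | m
  · refine ⟨U^n, by positivity, fun r hr h0 hu _ => ⟨fun x => ?_, fun h => by omega⟩⟩
    have h1 : 0 < (r x)⁻¹ := inv_pos.2 (h0 x)
    have h2 : |(r x)⁻¹ ^ n| ≤ U^n := by
      rw [abs_of_nonneg (by positivity)]
      exact pow_le_pow_left₀ h1.le (hu x) n
    simp only [iteratedDeriv_zero]
    simpa [sg] using h2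
  · have ih' : ∀ s, ∃ C : ℝ, s < m + 1 → 0 ≤ C ∧ ∀ r : ℝ → ℝ, SP r → (∀ x, 0 < r x) →
      (∀ x, (r x)⁻¹ ≤ U) → (∀ j, 1 ≤ j → j ≤ N → ∀ x, |iteratedDeriv j r x| ≤ B) →
      (∀ x, |iteratedDeriv s (fun x => (r x)⁻¹ ^ (n+1)) x| ≤ C * (1 + sg r s x)) := by
      intro s
      by_cases hs : s < m + 1
      · obtain ⟨C, hC, h⟩ := ih s hs (by omega) (n+1)
        exact ⟨C, fun _ => ⟨hC, fun r a b c d => (h r a b c d).1⟩⟩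
      · exact ⟨0, fun h => absurd h hs⟩
    choose C hC using ih'
    set K : ℝ := 1 + N * B + B with hK
    have hK0 : 0 ≤ K := by positivity
    set D : ℝ := n * ∑ s ∈ Finset.range (m+1), (m.choose s : ℝ) * C s * K with hD
    have hD0 : 0 ≤ D := by
      refine mul_nonneg (by positivity) (Finset.sum_nonneg (fun s hs => ?_))
      have := (hC s (Finset.mem_range.1 hs)).1
      positivity
    have main : ∀ r : ℝ → ℝ, SP r → (∀ x, 0 < r x) →
      (∀ x, (r x)⁻¹ ≤ U) → (∀ j, 1 ≤ j → j ≤ N → ∀ x, |iteratedDeriv j r x| ≤ B) →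
      ∀ x, |iteratedDeriv (m+1) (fun x => (r x)⁻¹ ^ n) x| ≤ D * sg r (m+1) x := by
      intro r hr h0 hu hb x
      rw [iter_upow hr h0, abs_mul, abs_neg, Nat.abs_cast, hD, mul_assoc]
      refine mul_le_mul_of_nonneg_left ?_ (by positivity)
      refine (Finset.abs_sum_le_sum_abs _ _).trans ?_
      rw [Finset.sum_mul]
      refine Finset.sum_le_sum (fun s hs => ?_)
      have hs' := Finset.mem_range.1 hs
      obtain ⟨c0, c1⟩ := hC s hs'
      have c2 := c1 r hr h0 hu hb x
      rw [abs_mul, abs_mul, Nat.abs_cast, mul_assoc, mul_assoc, mul_assoc]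
      refine mul_le_mul_of_nonneg_left ?_ (by positivity)
      refine (mul_le_mul_of_nonneg_right c2 (abs_nonneg _)).trans ?_
      rw [mul_assoc]
      refine mul_le_mul_of_nonneg_left ?_ c0
      have hX := le_sg r (i := m+1) (j := m+1-s) (by omega) (by omega) x
      have hS0 := sg_nonneg r (m+1) x
      have hs0 := sg_nonneg r s x
      by_cases hsN : s ≤ N
      · have h1 : sg r s x ≤ N * B := (sg_le r (fun j a b => hb j a (by omega) x)).trans (by gcongr)
        calc (1 + sg r s x) * |iteratedDeriv (m+1-s) r x| ≤ (1 + N * B) * sg r (m+1) x := by gcongr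
          _ ≤ K * sg r (m+1) x := by gcongr; linarith
      · have e1 : m + 1 - s = 1 := by omega
        rw [e1] at hX ⊢
        have h1 := hb 1 le_rfl hN x
        have h2 := sg_mono r (i := s) (j := m+1) (by omega) x
        have h3 : 0 ≤ N * B := by positivity
        have h4 := abs_nonneg (iteratedDeriv 1 r x)
        have h5 : sg r s x * |iteratedDeriv 1 r x| ≤ sg r (m+1) x * B := by gcongr
        have h6 := mul_nonneg h3 hS0
        rw [hK]
        nlinarith
    refine ⟨D, hD0, fun r hr h0 hu hb => ⟨fun x => ?_, fun _ => main r hr h0 hu hb⟩⟩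
    refine (main r hr h0 hu hb x).trans ?_
    gcongr
    linarith

/-- commutator -/
noncomputable def cmt (n l : ℕ) (r : ℝ → ℝ) (x : ℝ) : ℝ :=
  iteratedDeriv (l+1) (fun x => (r x)⁻¹ ^ n) x + n * ((r x)⁻¹ ^ (n+1) * iteratedDeriv (l+1) r x)

lemma comm_eq {r : ℝ → ℝ} (hr : SP r) (h0 : ∀ x, 0 < r x) (n l : ℕ) (x : ℝ) :
    cmt n l r x = (-(n:ℝ)) * ∑ s ∈ Finset.range l,
      (l.choose (s+1) : ℝ) * iteratedDeriv (s+1) (fun x => (r x)⁻¹ ^ (n+1)) x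
        * iteratedDeriv (l - s) r x := by
  rw [cmt, iter_upow hr h0, Finset.sum_range_succ']
  simp only [Nat.choose_zero_right, Nat.cast_one, iteratedDeriv_zero, one_mul,
    Nat.sub_zero, Nat.add_sub_add_right]
  ring

lemma comm_bound {l : ℕ} (hl : 3 ≤ l) {B U : ℝ} (hB : 0 ≤ B) (hU : 0 ≤ U) (n : ℕ) :
    ∃ C : ℝ, 0 ≤ C ∧ ∀ r : ℝ → ℝ, SP r → (∀ x, 0 < r x) →
      (∀ x, (r x)⁻¹ ≤ U) → (∀ j, 1 ≤ j → j ≤ l - 2 → ∀ x, |iteratedDeriv j r x| ≤ B) →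
      ∀ x, |cmt n l r x| ≤ C * (sg r l x + |iteratedDeriv (l-1) r x| * |iteratedDeriv 2 r x|) := by
  have hc : ∀ s, ∃ C : ℝ, s < l → 0 ≤ C ∧ ∀ r : ℝ → ℝ, SP r → (∀ x, 0 < r x) →
      (∀ x, (r x)⁻¹ ≤ U) → (∀ j, 1 ≤ j → j ≤ l - 2 → ∀ x, |iteratedDeriv j r x| ≤ B) →
      (∀ x, |iteratedDeriv (s+1) (fun x => (r x)⁻¹ ^ (n+1)) x| ≤ C * (1 + sg r (s+1) x)) := by
    intro s
    by_cases hs : s < l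
    · obtain ⟨C, hC, h⟩ := compA (N := l - 2) (by omega) hB hU (s+1) (by omega) (n+1)
      exact ⟨C, fun _ => ⟨hC, fun r a b c d => (h r a b c d).1⟩⟩
    · exact ⟨0, fun h => absurd h hs⟩
  choose C hC using hc
  set K : ℝ := 1 + l * B + B with hK
  have hK0 : 0 ≤ K := by positivity
  set D : ℝ := n * ∑ s ∈ Finset.range l, (l.choose (s+1) : ℝ) * C s * K with hD
  have hD0 : 0 ≤ D := by
    refine mul_nonneg (by positivity) (Finset.sum_nonneg (fun s hs => ?_))
    have := (hC s (Finset.mem_range.1 hs)).1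
    positivity
  refine ⟨D, hD0, fun r hr h0 hu hb x => ?_⟩
  rw [comm_eq hr h0, abs_mul, abs_neg, Nat.abs_cast, hD, mul_assoc]
  refine mul_le_mul_of_nonneg_left ?_ (by positivity)
  refine (Finset.abs_sum_le_sum_abs _ _).trans ?_
  rw [Finset.sum_mul]
  refine Finset.sum_le_sum (fun s hs => ?_)
  have hs' := Finset.mem_range.1 hs
  obtain ⟨c0, c1⟩ := hC s hs'
  have c2 := c1 r hr h0 hu hb x
  rw [abs_mul, abs_mul, Nat.abs_cast, mul_assoc, mul_assoc, mul_assoc]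
  refine mul_le_mul_of_nonneg_left ?_ (by positivity)
  refine (mul_le_mul_of_nonneg_right c2 (abs_nonneg _)).trans ?_
  rw [mul_assoc]
  refine mul_le_mul_of_nonneg_left ?_ c0
  set P := |iteratedDeriv (l-1) r x| * |iteratedDeriv 2 r x| with hP
  have hP0 : 0 ≤ P := by positivity
  have hX := le_sg r (i := l) (j := l-s) (by omega) (by omega) x
  have hS0 := sg_nonneg r l x
  have hl0 : (0:ℝ) ≤ l * B := by positivity
  rcases (by omega : s + 1 ≤ l - 2 ∨ s + 2 = l ∨ s + 1 = l) with h | h | h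
  · have h1 : sg r (s+1) x ≤ l * B := (sg_le r (fun j a b => hb j a (by omega) x)).trans
      (by gcongr; omega)
    calc (1 + sg r (s+1) x) * |iteratedDeriv (l-s) r x| ≤ (1 + l * B) * sg r l x := by
          gcongr
      _ ≤ K * (sg r l x + P) := by gcongr <;> linarith
  · have h1 : sg r s x ≤ l * B := (sg_le r (fun j a b => hb j a (by omega) x)).trans
      (by gcongr)
    have e : l - s = 2 := by omega
    have e' : l - 1 = s + 1 := by omega
    rw [e] at hX ⊢
    rw [sg_succ, ← e']
    have h2 : sg r s x * |iteratedDeriv 2 r x| ≤ l * B * sg r l x := by gcongr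
    have h3 := mul_nonneg hl0 hP0
    have h4 := mul_nonneg hB hP0
    have h5 := mul_nonneg hB hS0
    rw [hK]
    nlinarith
  · have e : l - s = 1 := by omega
    rw [e] at hX ⊢
    rw [h]
    have h1 := hb 1 le_rfl (by omega) x
    have h2 : sg r l x * |iteratedDeriv 1 r x| ≤ sg r l x * B := by gcongr
    have h3 := mul_nonneg hl0 hP0
    have h4 := mul_nonneg hB hP0
    have h5 := mul_nonneg hl0 hS0
    rw [hK]
    nlinarith

lemma comm_two {U : ℝ} (hU : 0 ≤ U) (n : ℕ) :
    ∃ C : ℝ, 0 ≤ C ∧ ∀ r : ℝ → ℝ, SP r → (∀ x, 0 < r x) → (∀ x, (r x)⁻¹ ≤ U) → ∀ x,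
      |iteratedDeriv 2 (fun x => (r x)⁻¹ ^ n) x|
        ≤ C * (|iteratedDeriv 2 r x| + |iteratedDeriv 1 r x|^2) ∧
      |cmt n 2 r x| ≤ C * (|iteratedDeriv 1 r x| * |iteratedDeriv 2 r x|
          + |iteratedDeriv 1 r x|^3) := by
  have h1 : ∀ m : ℕ, ∃ C : ℝ, 0 ≤ C ∧ ∀ r : ℝ → ℝ, SP r → (∀ x, 0 < r x) →
      (∀ x, (r x)⁻¹ ≤ U) → ∀ x, |iteratedDeriv 1 (fun x => (r x)⁻¹ ^ m) x|
        ≤ C * |iteratedDeriv 1 r x| := by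
    intro m
    refine ⟨m * U^(m+1), by positivity, fun r hr h0 hu x => ?_⟩
    have hp : 0 < (r x)⁻¹ := inv_pos.2 (h0 x)
    have := iter_upow hr h0 m 0 x
    simp only [zero_add] at this
    rw [this]
    simp only [Finset.sum_range_one, Nat.choose_self, Nat.cast_one, iteratedDeriv_zero, one_mul,
      Nat.sub_zero]
    rw [abs_mul, abs_neg, Nat.abs_cast, abs_mul, abs_of_nonneg (pow_nonneg hp.le _), mul_assoc]
    gcongr
    exact hu x
  have h2 : ∀ m : ℕ, ∃ C : ℝ, 0 ≤ C ∧ ∀ r : ℝ → ℝ, SP r → (∀ x, 0 < r x) →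
      (∀ x, (r x)⁻¹ ≤ U) → ∀ x, |iteratedDeriv 2 (fun x => (r x)⁻¹ ^ m) x|
        ≤ C * (|iteratedDeriv 2 r x| + |iteratedDeriv 1 r x|^2) := by
    intro m
    obtain ⟨C, hC, h⟩ := h1 (m+1)
    refine ⟨m * (U^(m+1) + C), by positivity, fun r hr h0 hu x => ?_⟩
    have hp : 0 < (r x)⁻¹ := inv_pos.2 (h0 x)
    have hh := h r hr h0 hu x
    have := iter_upow hr h0 m 1 x
    rw [this]
    simp only [Finset.sum_range_succ, Finset.sum_range_zero, iteratedDeriv_zero,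
      Nat.choose_zero_right, Nat.choose_self, Nat.cast_one, one_mul, zero_add, Nat.sub_zero,
      Nat.reduceAdd]
    rw [abs_mul, abs_neg, Nat.abs_cast, mul_assoc]
    refine mul_le_mul_of_nonneg_left ?_ (by positivity)
    refine (abs_add_le _ _).trans ?_
    rw [abs_mul, abs_mul, abs_of_nonneg (pow_nonneg hp.le _)]
    have a1 : (r x)⁻¹ ^ (m+1) * |iteratedDeriv 2 r x| ≤ U^(m+1) * |iteratedDeriv 2 r x| := by
      gcongr; exact hu x
    have a2 := mul_le_mul_of_nonneg_right hh (abs_nonneg (iteratedDeriv 1 r x))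
    have a3 : 0 ≤ U^(m+1) * |iteratedDeriv 1 r x|^2 := by positivity
    have a4 : 0 ≤ C * |iteratedDeriv 2 r x| := by positivity
    nlinarith
  obtain ⟨C2, hC2, g2⟩ := h2 n
  obtain ⟨D1, hD1, k1⟩ := h1 (n+1)
  obtain ⟨D2, hD2, k2⟩ := h2 (n+1)
  refine ⟨C2 + n * (2 * D1 + D2), by positivity, fun r hr h0 hu x => ⟨?_, ?_⟩⟩
  · refine (g2 r hr h0 hu x).trans ?_
    gcongr
    have : 0 ≤ n * (2 * D1 + D2) := by positivity
    linarith
  · rw [comm_eq hr h0]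
    simp only [Finset.sum_range_succ, Finset.sum_range_zero, zero_add, Nat.reduceAdd,
      Nat.sub_zero, Nat.choose_self, Nat.cast_one, one_mul, Nat.choose_one_right, Nat.reduceSub]
    have b1 := k1 r hr h0 hu x
    have b2 := k2 r hr h0 hu x
    set a := |iteratedDeriv 1 r x| with ha
    set b := |iteratedDeriv 2 r x| with hb
    have ha0 : 0 ≤ a := abs_nonneg _
    have hb0 : 0 ≤ b := abs_nonneg _
    rw [abs_mul, abs_neg, Nat.abs_cast]
    have : (n:ℝ) * |((2:ℕ):ℝ) * iteratedDeriv 1 (fun x => (r x)⁻¹ ^ (n+1)) x * iteratedDeriv 2 r x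
        + iteratedDeriv 2 (fun x => (r x)⁻¹ ^ (n+1)) x * iteratedDeriv 1 r x|
        ≤ n * ((2 * D1 + D2) * (a * b + a^3)) := by
      refine mul_le_mul_of_nonneg_left ?_ (by positivity)
      refine (abs_add_le _ _).trans ?_
      rw [abs_mul, abs_mul, abs_mul, ← ha, ← hb, Nat.abs_cast]
      have c1 := mul_le_mul_of_nonneg_right b1 hb0
      have c2 := mul_le_mul_of_nonneg_right b2 ha0
      have c3 : 0 ≤ D1 * a^3 := by positivity
      push_cast
      nlinarith
    refine this.trans ?_
    have : 0 ≤ C2 * (a * b + a^3) := by positivity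
    linarith

lemma int_le {f g : ℝ → ℝ} (hf : Continuous f) (hg : Continuous g) (h : ∀ x, f x ≤ g x) :
    ∫ x in (0:ℝ)..(2 * Real.pi), f x ≤ ∫ x in (0:ℝ)..(2 * Real.pi), g x :=
  intervalIntegral.integral_mono tp (hf.intervalIntegrable _ _) (hg.intervalIntegrable _ _) h

lemma interp_sum (l : ℕ) (η : ℝ) (hη : 0 < η) : ∃ C : ℝ, 0 ≤ C ∧
    ∀ f : ℝ → ℝ, SP f → ∑ j ∈ Finset.Icc 1 l, en j f ≤ η * en (l+1) f + C * en 1 f := by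
  have h : ∀ j, ∃ C : ℝ, j ∈ Finset.Icc 1 l → 0 ≤ C ∧ ∀ f : ℝ → ℝ, SP f →
      en j f ≤ (η / (l + 1)) * en (l+1) f + C * en 1 f := by
    intro j
    by_cases hj : j ∈ Finset.Icc 1 l
    · obtain ⟨C, hC, h⟩ := interp_le (Finset.mem_Icc.1 hj).1 (Finset.mem_Icc.1 hj).2
        (η / (l+1)) (by positivity)
      exact ⟨C, fun _ => ⟨hC, h⟩⟩
    · exact ⟨0, fun h => absurd h hj⟩
  choose C hC using h
  refine ⟨∑ j ∈ Finset.Icc 1 l, C j, Finset.sum_nonneg (fun j hj => (hC j hj).1), fun f hf => ?_⟩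
  refine (Finset.sum_le_sum (fun j hj => (hC j hj).2 f hf)).trans ?_
  rw [Finset.sum_add_distrib, Finset.sum_const, Nat.card_Icc, ← Finset.sum_mul]
  have := en_nonneg (l+1) f
  have h2 : ((l + 1 - 1 : ℕ) • (η / ((l:ℝ)+1) * en (l+1) f)) ≤ η * en (l+1) f := by
    rw [Nat.add_sub_cancel, nsmul_eq_mul]
    have h3 : (l:ℝ) * (η / (l+1) * en (l+1) f) = (l / (l+1)) * (η * en (l+1) f) := by
      field_simp
    rw [h3]
    have h4 : (l:ℝ) / (l+1) ≤ 1 := by rw [div_le_one (by positivity)]; linarith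
    exact mul_le_of_le_one_left (by positivity) h4
  linarith

lemma cmt_cont {r : ℝ → ℝ} (hr : SP r) (h0 : ∀ x, 0 < r x) (n l : ℕ) :
    Continuous (cmt n l r) := by
  unfold cmt
  have h1 := (((hr.inv h0).pow n).iter (l+1)).cont
  have h2 := ((hr.inv h0).pow (n+1)).cont
  have h3 := (hr.iter (l+1)).cont
  fun_prop

lemma int_sg_sq {r : ℝ → ℝ} (hr : SP r) (l : ℕ) :
    ∫ x in (0:ℝ)..(2 * Real.pi), (sg r l x)^2 ≤ l * ∑ j ∈ Finset.Icc 1 l, en j r := by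
  have hc : ∀ j, Continuous (iteratedDeriv j r) := fun j => (hr.iter j).cont
  have : l * ∑ j ∈ Finset.Icc 1 l, en j r = ∫ x in (0:ℝ)..(2 * Real.pi),
      l * ∑ j ∈ Finset.Icc 1 l, (iteratedDeriv j r x)^2 := by
    rw [intervalIntegral.integral_const_mul, intervalIntegral.integral_finsetSum]
    · rfl
    · intro j _
      exact ((hc j).pow 2).intervalIntegrable _ _
  rw [this]
  refine int_le ?_ ?_ (fun x => sg_sq r l x)
  · unfold sg; fun_prop
  · fun_prop

lemma cmt_energy_ge {l : ℕ} (hl : 3 ≤ l) {A U : ℝ} (hA : 0 ≤ A) (hU : 0 ≤ U) (n : ℕ)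
    (η : ℝ) (hη : 0 < η) : ∃ C : ℝ, 0 ≤ C ∧ ∀ r : ℝ → ℝ, SP r → (∀ x, 0 < r x) →
      (∀ x, (r x)⁻¹ ≤ U) → (∀ j, 1 ≤ j → j ≤ l - 1 → en j r ≤ A) →
      (∫ x in (0:ℝ)..(2 * Real.pi), (cmt n l r x)^2) ≤ η * en (l+1) r + C * en 1 r ∧
      en l (fun x => (r x)⁻¹ ^ n) ≤ η * en (l+1) r + C * en 1 r := by
  set B := √(2 * Real.pi * A) with hBdef
  have hB : 0 ≤ B := Real.sqrt_nonneg _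
  obtain ⟨C1, hC1, h1⟩ := comm_bound hl hB hU n
  obtain ⟨C2, hC2, h2⟩ := compA (N := l - 2) (by omega) hB hU l (by omega) n
  set K : ℝ := 2 * C1^2 * (l + 2 * Real.pi * A) + C2^2 * l + 1 with hK
  have hK0 : 0 < K := by positivity
  obtain ⟨C, hC, h⟩ := interp_sum l (η / K) (by positivity)
  refine ⟨K * C, by positivity, fun r hr h0 hu he => ?_⟩
  have hb : ∀ j, 1 ≤ j → j ≤ l - 2 → ∀ x, |iteratedDeriv j r x| ≤ B := by
    intro j hj1 hj2 x
    apply Real.abs_le_sqrt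
    refine (sup_sq hr hj1 x).trans ?_
    have := he (j+1) (by omega) (by omega)
    gcongr
  have hc : ∀ j, Continuous (iteratedDeriv j r) := fun j => (hr.iter j).cont
  have hsc : Continuous (sg r l) := by unfold sg; fun_prop
  have hsum := h r hr
  set Sm := ∑ j ∈ Finset.Icc 1 l, en j r with hSm
  have hSm0 : 0 ≤ Sm := Finset.sum_nonneg (fun j _ => en_nonneg j r)
  have hS := int_sg_sq hr l
  have hel : en l r ≤ Sm := Finset.single_le_sum (f := fun j => en j r)
    (fun j _ => en_nonneg j r) (Finset.mem_Icc.2 ⟨by omega, le_rfl⟩)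
  have hfin : K * Sm ≤ η * en (l+1) r + K * C * en 1 r := by
    have := mul_le_mul_of_nonneg_left hsum hK0.le
    have e : K * (η / K * en (l+1) r + C * en 1 r) = η * en (l+1) r + K * C * en 1 r := by
      field_simp
    linarith
  constructor
  · refine le_trans ?_ hfin
    have hq : ∀ x, (cmt n l r x)^2 ≤ (2 * C1^2) * (sg r l x)^2
        + (2 * C1^2 * (2 * Real.pi * en l r)) * (iteratedDeriv 2 r x)^2 := by
      intro x
      have a1 := h1 r hr h0 hu hb x
      have a2 : (cmt n l r x)^2 ≤ (C1 * (sg r l x + |iteratedDeriv (l-1) r x|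
          * |iteratedDeriv 2 r x|))^2 := by
        rw [← sq_abs]; exact pow_le_pow_left₀ (abs_nonneg _) a1 2
      have a3 := sup_sq hr (j := l - 1) (by omega) x
      rw [show l - 1 + 1 = l by omega] at a3
      have a4 := mul_le_mul_of_nonneg_right a3 (sq_nonneg (iteratedDeriv 2 r x))
      have a5 : (|iteratedDeriv (l-1) r x| * |iteratedDeriv 2 r x|)^2
        = (iteratedDeriv (l-1) r x)^2 * (iteratedDeriv 2 r x)^2 := by
        rw [mul_pow, sq_abs, sq_abs]
      refine a2.trans ?_
      rw [mul_pow]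
      have a6 : (sg r l x + |iteratedDeriv (l-1) r x| * |iteratedDeriv 2 r x|)^2
        ≤ 2 * (sg r l x)^2 + 2 * (2 * Real.pi * en l r * (iteratedDeriv 2 r x)^2) := by
        nlinarith [sq_nonneg (sg r l x - |iteratedDeriv (l-1) r x| * |iteratedDeriv 2 r x|)]
      exact (mul_le_mul_of_nonneg_left a6 (sq_nonneg C1)).trans_eq (by ring)
    refine (int_le ((cmt_cont hr h0 n l).pow 2) (by fun_prop) hq).trans ?_
    rw [intervalIntegral.integral_add, intervalIntegral.integral_const_mul,
      intervalIntegral.integral_const_mul]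
    rotate_left
    · exact Continuous.intervalIntegrable (by fun_prop) _ _
    · exact Continuous.intervalIntegrable (by fun_prop) _ _
    change _ + 2 * C1^2 * (2 * Real.pi * en l r) * en 2 r ≤ _
    have h2A := he 2 (by omega) (by omega)
    have b1 : en l r * en 2 r ≤ Sm * A :=
      mul_le_mul hel h2A (en_nonneg 2 r) hSm0
    have b2 := mul_le_mul_of_nonneg_left hS (by positivity : 0 ≤ 2 * C1^2)
    have b3 := mul_le_mul_of_nonneg_left b1 (by positivity : 0 ≤ 2 * C1^2 * (2 * Real.pi))
    have b4 : 0 ≤ (C2^2 * l + 1) * Sm := by positivity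
    rw [hK]
    nlinarith
  · refine le_trans ?_ hfin
    have hq : ∀ x, (iteratedDeriv l (fun x => (r x)⁻¹ ^ n) x)^2 ≤ C2^2 * (sg r l x)^2 := by
      intro x
      have a1 := (h2 r hr h0 hu hb).2 (by omega) x
      rw [← mul_pow, ← sq_abs]
      exact pow_le_pow_left₀ (abs_nonneg _) a1 2
    have hgc := (((hr.inv h0).pow n).iter l).cont
    refine (int_le (hgc.pow 2) (by fun_prop) hq).trans ?_
    rw [intervalIntegral.integral_const_mul]
    have b2 := mul_le_mul_of_nonneg_left hS (by positivity : 0 ≤ C2^2)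
    have b4 : 0 ≤ (2 * C1^2 * (l + 2 * Real.pi * A) + 1) * Sm := by positivity
    rw [hK]
    nlinarith

set_option maxHeartbeats 1000000 in
lemma cmt_energy_two {A U : ℝ} (hA : 0 ≤ A) (hU : 0 ≤ U) (n : ℕ)
    (η : ℝ) (hη : 0 < η) : ∃ C : ℝ, 0 ≤ C ∧ ∀ r : ℝ → ℝ, SP r → (∀ x, 0 < r x) →
      (∀ x, (r x)⁻¹ ≤ U) → en 1 r ≤ A →
      (∫ x in (0:ℝ)..(2 * Real.pi), (cmt n 2 r x)^2) ≤ η * en 3 r + C * en 1 r ∧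
      en 2 (fun x => (r x)⁻¹ ^ n) ≤ η * en 3 r + C * en 1 r := by
  obtain ⟨C1, hC1, h1⟩ := comm_two hU n
  set η1 : ℝ := η / (2 * (2 * C1^2 * A + 1)) with hη1
  have hη1' : 0 < η1 := by positivity
  set K : ℝ := 2 * C1^2 * (A * η1⁻¹ + 4 * A^2) + 2 * C1^2 * (1 + 2 * Real.pi * A) + 1 with hK
  have hK0 : 0 < K := by positivity
  obtain ⟨C, hC, h⟩ := interp 1 (η / (2 * K)) (by positivity)
  refine ⟨K * C, by positivity, fun r hr h0 hu he => ?_⟩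
  have hint := h r hr
  norm_num at hint
  have e1 := en_nonneg 1 r
  have e2 := en_nonneg 2 r
  have e3 := en_nonneg 3 r
  have hc : ∀ j, Continuous (iteratedDeriv j r) := fun j => (hr.iter j).cont
  have hfin : K * en 2 r ≤ η / 2 * en 3 r + K * C * en 1 r := by
    have := mul_le_mul_of_nonneg_left hint hK0.le
    have e : K * (η / (2 * K) * en 3 r + C * en 1 r) = η / 2 * en 3 r + K * C * en 1 r := by
      field_simp
    linarith
  constructor
  · have hX2 : ∀ x, (iteratedDeriv 2 r x)^2 ≤ η1 * en 3 r + η1⁻¹ * en 2 r := by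
      intro x
      have h4 := sup_four hr (j := 2) (by norm_num) x
      simp only [Nat.reduceAdd] at h4
      refine abs_le_of_sq_le_sq' (a := (iteratedDeriv 2 r x)^2) ?_ (by positivity) |>.2
      have : η1 * η1⁻¹ = 1 := mul_inv_cancel₀ hη1'.ne'
      have e : (η1 * en 3 r) * (η1⁻¹ * en 2 r) = en 2 r * en 3 r := by
        calc _ = (η1 * η1⁻¹) * (en 2 r * en 3 r) := by ring
          _ = _ := by rw [this, one_mul]
      nlinarith [sq_nonneg (η1 * en 3 r - η1⁻¹ * en 2 r)]
    have hq : ∀ x, (cmt n 2 r x)^2 ≤ (2 * C1^2 * (η1 * en 3 r + η1⁻¹ * en 2 r)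
        + 2 * C1^2 * (4 * en 1 r * en 2 r)) * (iteratedDeriv 1 r x)^2 := by
      intro x
      have a1 := (h1 r hr h0 hu x).2
      have a2 : (cmt n 2 r x)^2 ≤ (C1 * (|iteratedDeriv 1 r x| * |iteratedDeriv 2 r x|
          + |iteratedDeriv 1 r x|^3))^2 := by
        rw [← sq_abs]; exact pow_le_pow_left₀ (abs_nonneg _) a1 2
      refine a2.trans ?_
      have h4 := sup_four hr (j := 1) (by norm_num) x
      simp only [Nat.reduceAdd] at h4
      have h5 := mul_le_mul_of_nonneg_right h4 (sq_nonneg (iteratedDeriv 1 r x))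
      have h6 := mul_le_mul_of_nonneg_right (hX2 x) (sq_nonneg (iteratedDeriv 1 r x))
      have b1 : (|iteratedDeriv 1 r x| * |iteratedDeriv 2 r x|)^2
        = (iteratedDeriv 2 r x)^2 * (iteratedDeriv 1 r x)^2 := by
        rw [mul_pow, sq_abs, sq_abs]; ring
      have b2 : (|iteratedDeriv 1 r x|^3)^2
        = (iteratedDeriv 1 r x)^4 * (iteratedDeriv 1 r x)^2 := by
        rw [← pow_mul, mul_comm 3 2, pow_mul, sq_abs]; ring
      rw [mul_pow]
      have a6 : (|iteratedDeriv 1 r x| * |iteratedDeriv 2 r x| + |iteratedDeriv 1 r x|^3)^2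
        ≤ 2 * ((η1 * en 3 r + η1⁻¹ * en 2 r) * (iteratedDeriv 1 r x)^2)
          + 2 * (4 * en 1 r * en 2 r * (iteratedDeriv 1 r x)^2) := by
        nlinarith [sq_nonneg (|iteratedDeriv 1 r x| * |iteratedDeriv 2 r x|
          - |iteratedDeriv 1 r x|^3)]
      exact (mul_le_mul_of_nonneg_left a6 (sq_nonneg C1)).trans_eq (by ring)
    refine (int_le ((cmt_cont hr h0 n 2).pow 2) (by fun_prop) hq).trans ?_
    rw [intervalIntegral.integral_const_mul]
    change _ * en 1 r ≤ _
    have hη2 : (2 * C1^2 * A + 1) * η1 = η / 2 := by rw [hη1]; field_simp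
    have c0 : 0 ≤ η1⁻¹ := by positivity
    calc _ ≤ (2 * C1^2 * (η1 * en 3 r + η1⁻¹ * en 2 r) + 2 * C1^2 * (4 * A * en 2 r)) * A := by
          gcongr
      _ = 2 * C1^2 * A * η1 * en 3 r + 2 * C1^2 * (A * η1⁻¹ + 4 * A^2) * en 2 r := by ring
      _ ≤ η / 2 * en 3 r + K * en 2 r := by
          have d1 : 2 * C1^2 * A * η1 ≤ η / 2 := by rw [← hη2]; nlinarith
          have d2 : 2 * C1^2 * (A * η1⁻¹ + 4 * A^2) ≤ K := by
            rw [hK]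
            have : 0 ≤ 2 * C1^2 * (1 + 2 * Real.pi * A) := by positivity
            linarith
          gcongr
      _ ≤ _ := by linarith
  · have hq : ∀ x, (iteratedDeriv 2 (fun x => (r x)⁻¹ ^ n) x)^2
        ≤ (2 * C1^2) * (iteratedDeriv 2 r x)^2
          + (2 * C1^2 * (2 * Real.pi * en 2 r)) * (iteratedDeriv 1 r x)^2 := by
      intro x
      have a1 := (h1 r hr h0 hu x).1
      have a2 : (iteratedDeriv 2 (fun x => (r x)⁻¹ ^ n) x)^2 ≤ (C1 * (|iteratedDeriv 2 r x|
          + |iteratedDeriv 1 r x|^2))^2 := by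
        rw [← sq_abs]; exact pow_le_pow_left₀ (abs_nonneg _) a1 2
      refine a2.trans ?_
      have h4 := sup_sq hr (j := 1) (by norm_num) x
      simp only [Nat.reduceAdd] at h4
      have h5 := mul_le_mul_of_nonneg_right h4 (sq_nonneg (iteratedDeriv 1 r x))
      rw [mul_pow]
      rw [sq_abs]
      have b1 : |iteratedDeriv 2 r x|^2 = (iteratedDeriv 2 r x)^2 := sq_abs _
      have a6 : (|iteratedDeriv 2 r x| + (iteratedDeriv 1 r x)^2)^2
        ≤ 2 * (iteratedDeriv 2 r x)^2 + 2 * (2 * Real.pi * en 2 r * (iteratedDeriv 1 r x)^2) := by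
        nlinarith [sq_nonneg (|iteratedDeriv 2 r x| - (iteratedDeriv 1 r x)^2)]
      exact (mul_le_mul_of_nonneg_left a6 (sq_nonneg C1)).trans_eq (by ring)
    have hgc := (((hr.inv h0).pow n).iter 2).cont
    refine (int_le (hgc.pow 2) (by fun_prop) hq).trans ?_
    rw [intervalIntegral.integral_add, intervalIntegral.integral_const_mul,
      intervalIntegral.integral_const_mul]
    rotate_left
    · exact Continuous.intervalIntegrable (by fun_prop) _ _
    · exact Continuous.intervalIntegrable (by fun_prop) _ _
    change 2 * C1^2 * en 2 r + 2 * C1^2 * (2 * Real.pi * en 2 r) * en 1 r ≤ _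
    calc _ ≤ 2 * C1^2 * en 2 r + 2 * C1^2 * (2 * Real.pi * en 2 r) * A := by gcongr
      _ = 2 * C1^2 * (1 + 2 * Real.pi * A) * en 2 r := by ring
      _ ≤ K * en 2 r := by
          have d2 : 2 * C1^2 * (1 + 2 * Real.pi * A) ≤ K := by
            rw [hK]
            have : 0 ≤ 2 * C1^2 * (A * η1⁻¹ + 4 * A^2) := by positivity
            linarith
          gcongr
      _ ≤ _ := hfin
      _ ≤ _ := by nlinarith

lemma cmt_energy {l : ℕ} (hl : 2 ≤ l) {A U : ℝ} (hA : 0 ≤ A) (hU : 0 ≤ U) (n : ℕ)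
    (η : ℝ) (hη : 0 < η) : ∃ C : ℝ, 0 ≤ C ∧ ∀ r : ℝ → ℝ, SP r → (∀ x, 0 < r x) →
      (∀ x, (r x)⁻¹ ≤ U) → (∀ j, 1 ≤ j → j ≤ l - 1 → en j r ≤ A) →
      (∫ x in (0:ℝ)..(2 * Real.pi), (cmt n l r x)^2) ≤ η * en (l+1) r + C * en 1 r ∧
      en l (fun x => (r x)⁻¹ ^ n) ≤ η * en (l+1) r + C * en 1 r := by
  rcases (by omega : l = 2 ∨ 3 ≤ l) with rfl | h
  · obtain ⟨C, hC, h⟩ := cmt_energy_two hA hU n η hη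
    exact ⟨C, hC, fun r a b c d => h r a b c (d 1 le_rfl (by norm_num))⟩
  · exact cmt_energy_ge h hA hU n η hη

lemma fCoeff_eq (f : ℝ → ℝ) (n : ℤ) :
    fCoeff f n = fourierCoeffOn (a := 0) (b := 2 * Real.pi) (by positivity)
      (fun x => (f x : ℂ)) n := by
  rw [fourierCoeffOn_eq_integral, fCoeff, sub_zero, Complex.real_smul]
  have hpi : (Real.pi : ℂ) ≠ 0 := by exact_mod_cast Real.pi_ne_zero
  congr 1
  · push_cast; rfl
  · congr 1
    funext x
    rw [fourier_coe_apply, smul_eq_mul, mul_comm]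
    congr 2
    push_cast
    field_simp

lemma parseval {f : ℝ → ℝ} (hf : SP f) :
    HasSum (fun n : ℤ => ‖fCoeff f n‖^2)
      ((2 * Real.pi)⁻¹ * ∫ x in (0:ℝ)..(2 * Real.pi), (f x)^2) := by
  have hc : Continuous (fun x => (f x : ℂ)) := by
    have := hf.cont
    fun_prop
  have hL : MemLp (fun x => (f x : ℂ)) 2 (volume.restrict (Ioc 0 (2 * Real.pi))) := by
    have : IsFiniteMeasure (volume.restrict (Ioc 0 (2 * Real.pi))) := inferInstance
    obtain ⟨M, hM⟩ := (isCompact_Icc (a := (0:ℝ)) (b := 2 * Real.pi)).exists_bound_of_continuousOn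
      hc.continuousOn
    refine MemLp.of_bound hc.aestronglyMeasurable M ?_
    refine (ae_restrict_iff' measurableSet_Ioc).2 (Filter.Eventually.of_forall (fun x hx => ?_))
    exact hM x ⟨hx.1.le, hx.2⟩
  have := hasSum_sq_fourierCoeffOn (a := 0) (b := 2 * Real.pi) (by positivity) hL
  simp only [← fCoeff_eq, sub_zero, smul_eq_mul, Complex.norm_real, Real.norm_eq_abs,
    sq_abs] at this
  exact this

lemma fCoeff_zero (f : ℝ → ℝ) : fCoeff f 0
    = (((2 * Real.pi)⁻¹ * ∫ x in (0:ℝ)..(2 * Real.pi), f x : ℝ) : ℂ) := by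
  simp [fCoeff, intervalIntegral.integral_ofReal]

lemma fCoeff_deriv {f : ℝ → ℝ} (hf : SP f) (n : ℤ) :
    fCoeff (deriv f) n = Complex.I * n * fCoeff f n := by
  by_cases hn : n = 0
  · subst hn
    rw [fCoeff_zero, int_deriv hf]; simp
  · have hc : Continuous (fun x => ((deriv f x : ℝ) : ℂ)) := by
      have := hf.deriv.cont
      fun_prop
    have h := fourierCoeffOn_of_hasDerivAt (a := 0) (b := 2 * Real.pi) (by positivity) hn
      (f := fun x => (f x : ℂ)) (f' := fun x => ((deriv f x : ℝ) : ℂ))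
      (fun x _ => (hf.hasDeriv x).ofReal_comp) (hc.intervalIntegrable _ _)
    have h0 := hf.2 0
    rw [zero_add] at h0
    simp only [← fCoeff_eq, h0] at h
    rw [h]
    have hpi : (Real.pi : ℂ) ≠ 0 := by exact_mod_cast Real.pi_ne_zero
    have hn' : (n : ℂ) ≠ 0 := by exact_mod_cast hn
    have hI := Complex.I_ne_zero
    push_cast
    field_simp
    ring

lemma norm_fCoeff_deriv {f : ℝ → ℝ} (hf : SP f) (n : ℤ) :
    ‖fCoeff (deriv f) n‖^2 = (n:ℝ)^2 * ‖fCoeff f n‖^2 := by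
  rw [fCoeff_deriv hf, norm_mul, norm_mul, Complex.norm_I, one_mul, mul_pow]
  simp

lemma en_eq_deriv (j : ℕ) (f : ℝ → ℝ) :
    en (j+1) f = ∫ x in (0:ℝ)..(2 * Real.pi), (deriv (iteratedDeriv j f) x)^2 := by
  simp only [en, iteratedDeriv_succ]

/-- Wirtinger -/
lemma wirt {r : ℝ → ℝ} (hr : SP r) (h1 : fCoeff r 1 = 0) (h2 : fCoeff r (-1) = 0) :
    4 * en 1 r ≤ en 2 r := by
  have p1 := parseval hr.deriv
  have p2 := parseval hr.deriv.deriv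
  have e1 := en_eq_deriv 0 r
  have e2 := en_eq_deriv 1 r
  simp only [iteratedDeriv_zero, iteratedDeriv_one] at e1 e2
  rw [← e1] at p1
  rw [← e2] at p2
  have key : ∀ n : ℤ, 4 * ‖fCoeff (deriv r) n‖^2 ≤ ‖fCoeff (deriv (deriv r)) n‖^2 := by
    intro n
    rw [norm_fCoeff_deriv hr.deriv]
    by_cases hn : n = 0 ∨ n = 1 ∨ n = -1
    · have : fCoeff (deriv r) n = 0 := by
        rw [fCoeff_deriv hr]
        rcases hn with rfl | rfl | rfl
        · simp
        · rw [h1, mul_zero]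
        · rw [h2, mul_zero]
      rw [this]; simp
    · have : (4:ℝ) ≤ (n:ℝ)^2 := by
        have : (4:ℤ) ≤ n^2 := by
          push Not at hn
          rcases (by omega : 2 ≤ n ∨ n ≤ -2) with h | h <;> nlinarith
        exact_mod_cast this
      exact mul_le_mul_of_nonneg_right this (by positivity)
  have := hasSum_le key (p1.mul_left 4) p2
  have hpi : 0 < (2 * Real.pi)⁻¹ := by positivity
  have h3 : (2 * Real.pi)⁻¹ * (4 * en 1 r) ≤ (2 * Real.pi)⁻¹ * en 2 r := by linarith
  exact le_of_mul_le_mul_left h3 hpi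

lemma le_seminorm2 {f : ℝ → ℝ} (hf : SP f) (n : ℤ) :
    (n:ℝ)^2 * |(fCoeff f n).re| ≤ seminorm2 f ∧ (n:ℝ)^2 * |(fCoeff f n).im| ≤ seminorm2 f := by
  set M := (2 * Real.pi)⁻¹ * ∫ x in (0:ℝ)..(2 * Real.pi), (deriv (deriv f) x)^2 with hM
  have hb : ∀ n : ℤ, (n:ℝ)^2 * ‖fCoeff f n‖ ≤ √M := by
    intro n
    apply Real.le_sqrt_of_sq_le
    have h1 := norm_fCoeff_deriv hf.deriv n
    rw [norm_fCoeff_deriv hf] at h1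
    have h2 : ((n:ℝ)^2 * ‖fCoeff f n‖)^2 = ‖fCoeff (deriv (deriv f)) n‖^2 := by rw [h1]; ring
    rw [h2]
    exact le_hasSum (parseval hf.deriv.deriv) n (fun _ _ => by positivity)
  constructor
  · refine le_trans ?_ (le_max_left _ _)
    refine le_ciSup (f := fun n : ℤ => (n:ℝ)^2 * |(fCoeff f n).re|) ⟨√M, ?_⟩ n
    rintro _ ⟨m, rfl⟩
    exact (mul_le_mul_of_nonneg_left (Complex.abs_re_le_norm _) (sq_nonneg _)).trans (hb m)
  · refine le_trans ?_ (le_max_right _ _)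
    refine le_ciSup (f := fun n : ℤ => (n:ℝ)^2 * |(fCoeff f n).im|) ⟨√M, ?_⟩ n
    rintro _ ⟨m, rfl⟩
    exact (mul_le_mul_of_nonneg_left (Complex.abs_im_le_norm _) (sq_nonneg _)).trans (hb m)

lemma en_le_seminorm2 : ∃ C : ℝ, 0 < C ∧ ∀ f : ℝ → ℝ, SP f → en 1 f ≤ C * (seminorm2 f)^2 := by
  have hs : Summable (fun n : ℤ => ((n:ℝ)^2)⁻¹) := by
    have := Real.summable_one_div_int_pow (p := 2)
    simpa using this
  set Z := ∑' n : ℤ, ((n:ℝ)^2)⁻¹ with hZ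
  have hZ0 : 0 ≤ Z := tsum_nonneg (fun n => by positivity)
  refine ⟨2 * Real.pi * (2 * Z) + 1, by positivity, fun f hf => ?_⟩
  have p1 := parseval hf.deriv
  have e1 := en_eq_deriv 0 f
  simp only [iteratedDeriv_zero] at e1
  rw [← e1] at p1
  have key : ∀ n : ℤ, ‖fCoeff (deriv f) n‖^2 ≤ (2 * (seminorm2 f)^2) * ((n:ℝ)^2)⁻¹ := by
    intro n
    rw [norm_fCoeff_deriv hf]
    by_cases hn : n = 0
    · subst hn; simp
    · have hn2 : 0 < (n:ℝ)^2 := by positivity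
      obtain ⟨a, b⟩ := le_seminorm2 hf n
      rw [← div_eq_mul_inv, le_div_iff₀ hn2, Complex.sq_norm, Complex.normSq_apply]
      have a' := pow_le_pow_left₀ (by positivity) a 2
      have b' := pow_le_pow_left₀ (by positivity) b 2
      rw [mul_pow, sq_abs] at a' b'
      nlinarith
  have := hasSum_le key p1 (hs.hasSum.mul_left _)
  rw [← hZ, inv_mul_le_iff₀ (by positivity)] at this
  nlinarith [sq_nonneg (seminorm2 f)]

/-- smooth on `ℝ × [0,∞)` -/
def SM (f : ℝ → ℝ → ℝ) : Prop :=
  ContDiffOn ℝ (⊤ : ℕ∞) (fun q : ℝ × ℝ => f q.1 q.2) (Set.univ ×ˢ Set.Ici (0:ℝ))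

lemma uniqOm : UniqueDiffOn ℝ ((Set.univ : Set ℝ) ×ˢ Set.Ici (0:ℝ)) :=
  uniqueDiffOn_univ.prod (uniqueDiffOn_Ici 0)

lemma memOm (θ : ℝ) {τ : ℝ} (h : 0 ≤ τ) : ((θ, τ) : ℝ × ℝ) ∈ (Set.univ : Set ℝ) ×ˢ Set.Ici (0:ℝ) :=
  ⟨Set.mem_univ _, h⟩

lemma nhdsOm (θ : ℝ) {τ : ℝ} (h : 0 < τ) :
    (Set.univ : Set ℝ) ×ˢ Set.Ici (0:ℝ) ∈ nhds ((θ, τ) : ℝ × ℝ) :=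
  prod_mem_nhds univ_mem (Ici_mem_nhds h)

lemma SM.hasDeriv_space {f : ℝ → ℝ → ℝ} (hf : SM f) (θ : ℝ) {τ : ℝ} (h : 0 ≤ τ) :
    HasDerivAt (fun x => f x τ)
      (fderivWithin ℝ (fun q : ℝ × ℝ => f q.1 q.2) (Set.univ ×ˢ Set.Ici (0:ℝ)) (θ, τ) (1, 0)) θ := by
  have h1 : HasFDerivWithinAt (fun q : ℝ × ℝ => f q.1 q.2) _ _ (θ, τ) :=
    (hf.differentiableOn (by simp) (θ, τ) (memOm θ h)).hasFDerivWithinAt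
  have h2 : HasDerivWithinAt (fun x : ℝ => ((x, τ) : ℝ × ℝ)) ((1:ℝ), (0:ℝ)) Set.univ θ :=
    (HasDerivAt.prodMk (hasDerivAt_id θ) (hasDerivAt_const θ τ)).hasDerivWithinAt
  have h3 := HasFDerivWithinAt.comp_hasDerivWithinAt (x := θ) (f := fun x : ℝ => ((x, τ) : ℝ × ℝ))
    (t := Set.univ ×ˢ Set.Ici (0:ℝ)) h1 h2 (fun x _ => memOm x h)
  exact hasDerivWithinAt_univ.1 h3

lemma SM.deriv {f : ℝ → ℝ → ℝ} (hf : SM f) : SM (fun θ τ => deriv (fun x => f x τ) θ) := by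
  have h1 : ContDiffOn ℝ (⊤ : ℕ∞) (fun q => fderivWithin ℝ (fun q : ℝ × ℝ => f q.1 q.2)
      (Set.univ ×ˢ Set.Ici (0:ℝ)) q ((1:ℝ), (0:ℝ))) (Set.univ ×ˢ Set.Ici (0:ℝ)) :=
    (ContDiffOn.fderivWithin hf uniqOm (by simp)).clm_apply contDiffOn_const
  refine h1.congr ?_
  rintro ⟨θ, τ⟩ ⟨_, h⟩
  exact (hf.hasDeriv_space θ h).deriv

lemma SM.iter {f : ℝ → ℝ → ℝ} (hf : SM f) (j : ℕ) :
    SM (fun θ τ => iteratedDeriv j (fun x => f x τ) θ) := by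
  induction j with
  | zero => simpa [iteratedDeriv_zero] using hf
  | succ n ih => simp only [iteratedDeriv_succ]; exact ih.deriv

lemma SM.slice {f : ℝ → ℝ → ℝ} (hf : SM f) {τ : ℝ} (h : 0 ≤ τ) :
    ContDiff ℝ (⊤ : ℕ∞) (fun x => f x τ) := by
  have : ContDiff ℝ (⊤ : ℕ∞) (fun x : ℝ => ((x, τ) : ℝ × ℝ)) := by fun_prop
  exact contDiffOn_univ.1 (ContDiffOn.comp (s := Set.univ) hf this.contDiffOn (fun x _ => memOm x h))

lemma SM.mul {f g : ℝ → ℝ → ℝ} (hf : SM f) (hg : SM g) : SM (fun θ τ => f θ τ * g θ τ) :=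
  ContDiffOn.mul hf hg

lemma SM.pow {f : ℝ → ℝ → ℝ} (hf : SM f) (n : ℕ) : SM (fun θ τ => f θ τ ^ n) :=
  ContDiffOn.pow hf n

lemma SM.inv {f : ℝ → ℝ → ℝ} (hf : SM f) (h0 : ∀ θ τ, 0 ≤ τ → 0 < f θ τ) :
    SM (fun θ τ => (f θ τ)⁻¹) :=
  ContDiffOn.inv hf (fun q hq => (h0 q.1 q.2 hq.2).ne')

lemma SM.at {f : ℝ → ℝ → ℝ} (hf : SM f) (θ : ℝ) {τ : ℝ} (h : 0 < τ) :
    ContDiffAt ℝ (⊤ : ℕ∞) (fun q : ℝ × ℝ => f q.1 q.2) (θ, τ) :=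
  ContDiffOn.contDiffAt hf (nhdsOm θ h)

lemma SM.hasDeriv_space' {f : ℝ → ℝ → ℝ} (hf : SM f) (θ : ℝ) {τ : ℝ} (h : 0 < τ) :
    HasDerivAt (fun x => f x τ)
      (fderiv ℝ (fun q : ℝ × ℝ => f q.1 q.2) (θ, τ) (1, 0)) θ := by
  have := hf.hasDeriv_space θ h.le
  rwa [fderivWithin_of_mem_nhds (nhdsOm θ h)] at this

lemma SM.hasDeriv_time {f : ℝ → ℝ → ℝ} (hf : SM f) (θ : ℝ) {τ : ℝ} (h : 0 < τ) :
    HasDerivAt (fun s => f θ s)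
      (fderiv ℝ (fun q : ℝ × ℝ => f q.1 q.2) (θ, τ) (0, 1)) τ := by
  have h1 : HasFDerivAt (fun q : ℝ × ℝ => f q.1 q.2) _ (θ, τ) :=
    ((hf.at θ h).differentiableAt (by simp)).hasFDerivAt
  have h2 : HasDerivAt (fun s : ℝ => ((θ, s) : ℝ × ℝ)) ((0:ℝ), (1:ℝ)) τ :=
    HasDerivAt.prodMk (hasDerivAt_const τ θ) (hasDerivAt_id τ)
  exact HasFDerivAt.comp_hasDerivAt (x := τ) (f := fun s : ℝ => ((θ, s) : ℝ × ℝ)) h1 h2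

lemma SM.swap {f : ℝ → ℝ → ℝ} (hf : SM f) {τ : ℝ} (h : 0 < τ) {g : ℝ → ℝ}
    (hg : ∀ θ, HasDerivAt (fun s => f θ s) (g θ) τ) (θ : ℝ) :
    HasDerivAt (fun s => _root_.deriv (fun x => f x s) θ) (_root_.deriv g θ) τ := by
  set F : ℝ × ℝ → ℝ := fun q => f q.1 q.2 with hF
  have e1 : g = fun x => fderiv ℝ F (x, τ) (0, 1) :=
    funext fun x => (hg x).unique (hf.hasDeriv_time x h)
  have hd : HasFDerivAt (fderiv ℝ F) (fderiv ℝ (fderiv ℝ F) (θ, τ)) (θ, τ) :=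
    (((hf.at θ h).fderiv_right (m := 1) (by norm_cast)).differentiableAt (by simp)).hasFDerivAt
  have h2 : HasDerivAt (fun s : ℝ => ((θ, s) : ℝ × ℝ)) ((0:ℝ), (1:ℝ)) τ :=
    HasDerivAt.prodMk (hasDerivAt_const τ θ) (hasDerivAt_id τ)
  have h3 : HasDerivAt (fun x : ℝ => ((x, τ) : ℝ × ℝ)) ((1:ℝ), (0:ℝ)) θ :=
    HasDerivAt.prodMk (hasDerivAt_id θ) (hasDerivAt_const θ τ)
  have d2 : HasDerivAt (fun s => fderiv ℝ F (θ, s)) (fderiv ℝ (fderiv ℝ F) (θ, τ) (0, 1)) τ :=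
    HasFDerivAt.comp_hasDerivAt (x := τ) (f := fun s : ℝ => ((θ, s) : ℝ × ℝ)) hd h2
  have d3 : HasDerivAt (fun x => fderiv ℝ F (x, τ)) (fderiv ℝ (fderiv ℝ F) (θ, τ) (1, 0)) θ :=
    HasFDerivAt.comp_hasDerivAt (x := θ) (f := fun x : ℝ => ((x, τ) : ℝ × ℝ)) hd h3
  have d2' := d2.clm_apply (hasDerivAt_const τ ((1:ℝ), (0:ℝ)))
  have d3' := d3.clm_apply (hasDerivAt_const θ ((0:ℝ), (1:ℝ)))
  have sym : IsSymmSndFDerivAt ℝ F (θ, τ) :=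
    (hf.at θ h).isSymmSndFDerivAt (by simp; norm_cast)
  have e2 : _root_.deriv g θ = fderiv ℝ (fderiv ℝ F) (θ, τ) (0, 1) (1, 0) := by
    rw [e1, d3'.deriv]
    simp [sym (1,0) (0,1)]
  rw [e2]
  have e3 : (fun s => _root_.deriv (fun x => f x s) θ) =ᶠ[nhds τ]
      fun s => fderiv ℝ F (θ, s) (1, 0) := by
    filter_upwards [Ioi_mem_nhds h] with s hs
    exact (hf.hasDeriv_space' θ hs).deriv
  refine HasDerivAt.congr_of_eventuallyEq ?_ e3
  simpa using d2'

lemma SM.swap_iter {f : ℝ → ℝ → ℝ} (hf : SM f) {τ : ℝ} (h : 0 < τ) {g : ℝ → ℝ}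
    (hg : ∀ θ, HasDerivAt (fun s => f θ s) (g θ) τ) (j : ℕ) : ∀ θ : ℝ,
    HasDerivAt (fun s => iteratedDeriv j (fun x => f x s) θ) (iteratedDeriv j g θ) τ := by
  induction j with
  | zero => simpa [iteratedDeriv_zero] using hg
  | succ n ih =>
    simp only [iteratedDeriv_succ]
    exact (hf.iter n).swap h ih

lemma SM.hasDeriv_int {f : ℝ → ℝ → ℝ} (hf : SM f) {τ : ℝ} (h : 0 < τ) {g : ℝ → ℝ}
    (hg : ∀ θ, HasDerivAt (fun s => f θ s) (g θ) τ) :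
    HasDerivAt (fun s => ∫ θ in (0:ℝ)..(2 * Real.pi), f θ s)
      (∫ θ in (0:ℝ)..(2 * Real.pi), g θ) τ := by
  set F : ℝ × ℝ → ℝ := fun q => f q.1 q.2 with hF
  have e1 : g = fun x => fderiv ℝ F (x, τ) (0, 1) :=
    funext fun x => (hg x).unique (hf.hasDeriv_time x h)
  have hc : ContinuousOn (fun q => fderiv ℝ F q (0, 1)) (Set.univ ×ˢ Set.Ioi (0:ℝ)) := by
    intro q hq
    have : ContinuousAt (fderiv ℝ F) q :=
      ((hf.at q.1 hq.2).fderiv_right (m := 1) (by norm_cast)).continuousAt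
    exact (this.clm_apply continuousAt_const).continuousWithinAt
  obtain ⟨M, hM⟩ := (isCompact_Icc (a := (0:ℝ)) (b := 2 * Real.pi)).prod
    (isCompact_Icc (a := τ/2) (b := 2 * τ)) |>.exists_bound_of_continuousOn
    (hc.mono (fun q hq => ⟨mem_univ _, lt_of_lt_of_le (by positivity) hq.2.1⟩))
  rw [e1]
  refine (intervalIntegral.hasDerivAt_integral_of_dominated_loc_of_deriv_le
    (F := fun s θ => f θ s) (F' := fun s θ => fderiv ℝ F (θ, s) (0, 1))
    (bound := fun _ => M) (s := Set.Ioo (τ/2) (2*τ)) (Ioo_mem_nhds (by linarith) (by linarith))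
    ?_ ?_ ?_ ?_ (by simp) ?_).2
  · filter_upwards [Ioi_mem_nhds h] with s hs
    exact (hf.slice (le_of_lt hs)).continuous.aestronglyMeasurable
  · exact (hf.slice h.le).continuous.intervalIntegrable _ _
  · have : Continuous (fun x => fderiv ℝ F (x, τ) (0, 1)) :=
      continuousOn_univ.1 (hc.comp (f := fun x : ℝ => ((x, τ) : ℝ × ℝ)) (s := Set.univ)
        (by fun_prop) (fun x _ => ⟨mem_univ _, h⟩))
    exact this.aestronglyMeasurable
  · refine Filter.Eventually.of_forall (fun x hx s hs => ?_)
    rw [Set.uIoc_of_le tp] at hx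
    exact hM (x, s) ⟨⟨hx.1.le, hx.2⟩, ⟨hs.1.le, hs.2.le⟩⟩
  · refine Filter.Eventually.of_forall (fun x hx s hs => ?_)
    exact hf.hasDeriv_time x (lt_trans (by positivity) hs.1)

lemma SM.cont_int {f : ℝ → ℝ → ℝ} (hf : SM f) :
    ContinuousOn (fun s => ∫ θ in (0:ℝ)..(2 * Real.pi), f θ s) (Set.Ici 0) := by
  have h1 : Continuous (fun q : ℝ × ℝ => f q.2 (max q.1 0)) := by
    refine continuousOn_univ.1 (ContDiffOn.continuousOn hf |>.comp
      (f := fun q : ℝ × ℝ => ((q.2, max q.1 0) : ℝ × ℝ)) (s := Set.univ) (by fun_prop)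
      (fun x _ => ⟨mem_univ _, by simp⟩))
  have h2 : Continuous (fun s => ∫ θ in (0:ℝ)..(2 * Real.pi), f θ (max s 0)) :=
    intervalIntegral.continuous_parametric_intervalIntegral_of_continuous' h1 _ _
  refine h2.continuousOn.congr (fun s hs => ?_)
  simp only [max_eq_left (show (0:ℝ) ≤ s from hs)]

/-- mean value -/
noncomputable def mn (r : ℝ → ℝ) : ℝ := (2 * Real.pi)⁻¹ * ∫ x in (0:ℝ)..(2 * Real.pi), r x

lemma mn_pos {r : ℝ → ℝ} (hr : Continuous r) (h0 : ∀ x, 0 < r x) : 0 < mn r := by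
  have : 0 < ∫ x in (0:ℝ)..(2 * Real.pi), r x :=
    intervalIntegral.intervalIntegral_pos_of_pos (hr.intervalIntegrable _ _) h0 (by positivity)
  unfold mn; positivity

lemma mn_close {f : ℝ → ℝ} (hf : Continuous f) {c d : ℝ} (h : ∀ x, |f x - c| ≤ d) :
    |mn f - c| ≤ d := by
  have hpi : 0 < 2 * Real.pi := by positivity
  have e : mn f - c = (2 * Real.pi)⁻¹ * ∫ x in (0:ℝ)..(2 * Real.pi), (f x - c) := by
    rw [intervalIntegral.integral_sub (hf.intervalIntegrable _ _) (by simp)]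
    simp [mn]
    field_simp
  rw [e, abs_mul, abs_of_pos (by positivity)]
  have := intervalIntegral.norm_integral_le_of_norm_le_const (a := 0) (b := 2 * Real.pi)
    (f := fun x => f x - c) (C := d) (fun x _ => h x)
  rw [sub_zero, abs_of_pos hpi, Real.norm_eq_abs] at this
  rw [inv_mul_le_iff₀ hpi]; linarith

lemma close_mean {r : ℝ → ℝ} (hr : SP r) {b : ℝ} (hb : 0 ≤ b)
    (h : 2 * Real.pi * en 1 r ≤ b^2) (x : ℝ) : |r x - mn r| ≤ b := by
  rw [abs_sub_comm]
  refine mn_close hr.cont (fun y => ?_)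
  exact abs_le_of_sq_le_sq ((osc_sq hr y x).trans h) hb

lemma pow_upper (n : ℕ) {x : ℝ} (h0 : 0 ≤ x) (h1 : x ≤ 1) : (1 + x)^n ≤ 1 + 3^n * x := by
  induction n with
  | zero => simp; linarith
  | succ n ih =>
    have h3 : (1:ℝ) ≤ 3^n := one_le_pow₀ (by norm_num)
    have : (3:ℝ)^n * (x * x) ≤ 3^n * x := by
      refine mul_le_mul_of_nonneg_left ?_ (by positivity)
      nlinarith
    have h4 : x ≤ 3^n * x := by nlinarith
    calc (1+x)^(n+1) = (1+x)^n * (1+x) := by ring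
      _ ≤ (1 + 3^n * x) * (1 + x) := mul_le_mul_of_nonneg_right ih (by linarith)
      _ ≤ 1 + 3^(n+1) * x := by rw [pow_succ]; nlinarith

lemma upow_close (n : ℕ) {x μ δ : ℝ} (hμ : 0 < μ) (h0 : 0 ≤ δ) (h1 : δ ≤ 1/2)
    (h : |x - μ| ≤ δ * μ) : |x⁻¹^n - μ⁻¹^n| ≤ (2 * 3^n * δ) * μ⁻¹^n := by
  have hx := abs_le.1 h
  have hxp : μ / 2 ≤ x := by nlinarith
  have hx0 : 0 < x := by linarith
  set y := μ / x with hy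
  have e : x⁻¹^n = y^n * μ⁻¹^n := by
    rw [hy, ← mul_pow]; congr 1; field_simp
  have y1 : y ≤ 1 + 2 * δ := by
    rw [hy, div_le_iff₀ hx0]; nlinarith [mul_nonneg h0 hμ.le]
  have y2 : 1 - δ ≤ y := by
    rw [hy, le_div_iff₀ hx0]; nlinarith [mul_nonneg h0 hμ.le]
  have h3 : (n:ℝ) ≤ 3^n := by exact_mod_cast (Nat.lt_pow_self (by norm_num : 1 < 3)).le
  have u1 : y^n ≤ 1 + 3^n * (2 * δ) :=
    (pow_le_pow_left₀ (by linarith) y1 n).trans (pow_upper n (by linarith) (by linarith))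
  have u2 : 1 - 3^n * δ ≤ y^n := by
    refine le_trans ?_ (pow_le_pow_left₀ (by linarith) y2 n)
    have := one_add_mul_le_pow (a := -δ) (by linarith) n
    have h4 : (n:ℝ) * δ ≤ 3^n * δ := mul_le_mul_of_nonneg_right h3 h0
    calc 1 - 3^n * δ ≤ 1 + n * (-δ) := by linarith
      _ ≤ (1 + -δ)^n := this
      _ = (1-δ)^n := by ring
  have hm : 0 < μ⁻¹^n := by positivity
  rw [e, show y^n * μ⁻¹^n - μ⁻¹^n = (y^n - 1) * μ⁻¹^n by ring, abs_mul, abs_of_pos hm]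
  refine mul_le_mul_of_nonneg_right ?_ hm.le
  have : 0 ≤ 3^n * δ := by positivity
  rw [abs_le]; constructor <;> linarith

lemma d1_upow {r : ℝ → ℝ} (hr : SP r) (h0 : ∀ x, 0 < r x) (p : ℕ) (x : ℝ) :
    iteratedDeriv 1 (fun x => (r x)⁻¹^p) x = -p * ((r x)⁻¹^(p+1) * deriv r x) := by
  rw [iteratedDeriv_one, deriv_upow hr h0]

lemma d2_upow {r : ℝ → ℝ} (hr : SP r) (h0 : ∀ x, 0 < r x) (p : ℕ) (x : ℝ) :
    iteratedDeriv 2 (fun x => (r x)⁻¹^p) x = -p * ((r x)⁻¹^(p+1) * iteratedDeriv 2 r x)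
      + p * (p+1) * ((r x)⁻¹^(p+2) * (deriv r x)^2) := by
  rw [iteratedDeriv_succ, iteratedDeriv_one, deriv_upow hr h0]
  have h1 : HasDerivAt (fun x => (r x)⁻¹^(p+1)) _ x := (((hr.inv h0).pow (p+1)).hasDeriv x)
  rw [deriv_upow hr h0] at h1
  have h2 := (h1.mul (hr.deriv.hasDeriv x)).const_mul (-(p:ℝ))
  have h3 := h2.deriv
  have e : iteratedDeriv 2 r x = deriv (deriv r) x := by
    rw [iteratedDeriv_succ, iteratedDeriv_one]
  rw [e]
  refine h3.trans ?_
  push_cast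
  ring

/-- time derivative of `en l` -/
noncomputable def dE (p l : ℕ) (r : ℝ → ℝ) : ℝ :=
  2 * en l r + 2 * (∫ x in (0:ℝ)..(2 * Real.pi),
      iteratedDeriv (l+1) r x * iteratedDeriv (l+1) (fun x => (r x)⁻¹^p) x)
    - 2 * ∫ x in (0:ℝ)..(2 * Real.pi), iteratedDeriv l r x * iteratedDeriv l (fun x => (r x)⁻¹^p) x

noncomputable def dM (p : ℕ) (r : ℝ → ℝ) : ℝ := mn r - mn (fun x => (r x)⁻¹^p)

lemma fixed_time (p : ℕ) (hp : 1 ≤ p) : ∃ C : ℝ, 0 ≤ C ∧ ∃ δ1 : ℝ, 0 < δ1 ∧ δ1 ≤ 1/2 ∧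
    ∀ r : ℝ → ℝ, ∀ δ : ℝ, SP r → (∀ x, 0 < r x) → fCoeff r 1 = 0 → fCoeff r (-1) = 0 →
      0 ≤ δ → δ ≤ δ1 → 2 * Real.pi * en 1 r ≤ (δ * mn r)^2 →
      (∀ x, |r x - mn r| ≤ δ * mn r) ∧
      dE p 1 r ≤ (2 - 6 * p * (mn r)⁻¹^(p+1) + C * δ * (mn r)⁻¹^(p+1)) * en 1 r ∧
      |dM p r - mn r * (1 - (mn r)⁻¹^(p+1))| ≤ C * δ * (mn r)⁻¹^(p+1) * mn r := by
  set K : ℝ := 2 * 3^(p+2) with hK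
  have hK1 : (1:ℝ) ≤ 3^p := one_le_pow₀ (by norm_num)
  have hKp : 2 * 3^p ≤ K := by rw [hK, pow_add]; nlinarith
  have hKp1 : 2 * 3^(p+1) ≤ K := by rw [hK, pow_add, pow_add]; nlinarith
  have hK0 : 0 < K := by positivity
  have hp1 : (1:ℝ) ≤ p := by exact_mod_cast hp
  -- A1 : coefficient
  set A1 : ℝ := K + (p+1) * (1 + K) with hA1
  have hA10 : 0 < A1 := by positivity
  refine ⟨8 * p * A1 + 2 * p * K + K, by positivity, min (1/2) (1/A1), by positivity,
    min_le_left _ _, ?_⟩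
  intro r δ hr h0 hf1 hf2 hδ0 hδ1 hE
  have hδh : δ ≤ 1/2 := hδ1.trans (min_le_left _ _)
  have hδA : A1 * δ ≤ 1 := by
    have := hδ1.trans (min_le_right _ _)
    rwa [le_div_iff₀ hA10, mul_comm] at this
  have hμ := mn_pos hr.cont h0
  set μ := mn r with hμd
  have hcl := close_mean hr (by positivity) hE
  refine ⟨hcl, ?_, ?_⟩
  · set φ := μ⁻¹^(p+1) with hφ
    have hφ0 : 0 < φ := by positivity
    have b1 : ∀ x, |(r x)⁻¹^(p+1) - φ| ≤ K * δ * φ := fun x => by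
      refine (upow_close (p+1) hμ hδ0 hδh (hcl x)).trans ?_
      exact mul_le_mul_of_nonneg_right (mul_le_mul_of_nonneg_right hKp1 hδ0) hφ0.le
    have b2 : ∀ x, (r x)⁻¹^(p+2) ≤ (1 + K) * (φ * μ⁻¹) := fun x => by
      have := (abs_le.1 (upow_close (p+2) hμ hδ0 hδh (hcl x))).2
      have e : μ⁻¹^(p+2) = φ * μ⁻¹ := by rw [hφ]; ring
      rw [e] at this
      have h5 : 0 ≤ φ * μ⁻¹ := by positivity
      have : (2 * 3^(p+2) * δ) * (φ * μ⁻¹) ≤ K * (φ * μ⁻¹) := by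
        refine mul_le_mul_of_nonneg_right ?_ h5
        rw [hK]
        have : (0:ℝ) ≤ 2 * 3^(p+2) := by positivity
        nlinarith
      linarith
    set E := en 1 r with hEd
    set D := en 2 r with hDd
    have hE0 : 0 ≤ E := en_nonneg _ _
    have hD0 : 0 ≤ D := en_nonneg _ _
    have hDE : 4 * E ≤ D := wirt hr hf1 hf2
    have hEe : E = ∫ x in (0:ℝ)..(2 * Real.pi), (deriv r x)^2 := by
      rw [hEd, en]; simp only [iteratedDeriv_one]
    have hDe : D = ∫ x in (0:ℝ)..(2 * Real.pi), (iteratedDeriv 2 r x)^2 := rfl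
    have c0 := hr.cont
    have c1 := hr.deriv.cont
    have c2 := (hr.iter 2).cont
    have cu : Continuous (fun x => (r x)⁻¹) := (hr.inv h0).cont
    -- cubic term
    have cub : ∫ x in (0:ℝ)..(2 * Real.pi), (deriv r x)^2 * |iteratedDeriv 2 r x| ≤ δ * μ * D := by
      have s1 : ∀ x, |deriv r x| ≤ √(2 * Real.pi * D) := fun x => by
        apply Real.abs_le_sqrt
        have := sup_sq hr (le_refl 1) x
        rwa [iteratedDeriv_one] at this
      have s2 := cs (f := fun x => |deriv r x|) (g := fun x => |iteratedDeriv 2 r x|) c1.abs c2.abs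
      simp only [sq_abs] at s2
      rw [← hEe, ← hDe] at s2
      have s3 : ∫ x in (0:ℝ)..(2 * Real.pi), (deriv r x)^2 * |iteratedDeriv 2 r x|
          ≤ ∫ x in (0:ℝ)..(2 * Real.pi), √(2 * Real.pi * D) * (|deriv r x| * |iteratedDeriv 2 r x|) := by
        refine int_le (by fun_prop) (by fun_prop) (fun x => ?_)
        rw [← sq_abs, sq, mul_assoc]
        exact mul_le_mul_of_nonneg_right (s1 x) (by positivity)
      rw [intervalIntegral.integral_const_mul] at s3
      refine s3.trans ?_
      refine abs_le_of_sq_le_sq' ?_ (by positivity) |>.2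
      rw [mul_pow, Real.sq_sqrt (by positivity)]
      calc 2 * Real.pi * D * _ ≤ 2 * Real.pi * D * (E * D) :=
            mul_le_mul_of_nonneg_left s2 (by positivity)
        _ = (2 * Real.pi * E) * D^2 := by ring
        _ ≤ (δ * μ)^2 * D^2 := mul_le_mul_of_nonneg_right hE (by positivity)
        _ = _ := by ring
    have I1 : ∫ x in (0:ℝ)..(2 * Real.pi),
        iteratedDeriv (1+1) r x * iteratedDeriv (1+1) (fun x => (r x)⁻¹^p) x
        ≤ -(p * ((1 - K * δ) * φ)) * D + p * (p+1) * ((1 + K) * (φ * μ⁻¹)) * (δ * μ * D) := by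
      have : ∫ x in (0:ℝ)..(2 * Real.pi),
        iteratedDeriv (1+1) r x * iteratedDeriv (1+1) (fun x => (r x)⁻¹^p) x
        ≤ ∫ x in (0:ℝ)..(2 * Real.pi), (-(p * ((1 - K * δ) * φ)) * (iteratedDeriv 2 r x)^2
          + p * (p+1) * ((1 + K) * (φ * μ⁻¹)) * ((deriv r x)^2 * |iteratedDeriv 2 r x|)) := by
        refine int_le ?_ (by fun_prop) (fun x => ?_)
        · exact c2.mul (((hr.inv h0).pow p).iter 2).cont
        · rw [show (1+1 : ℕ) = 2 from rfl, d2_upow hr h0]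
          have q1 := (abs_le.1 (b1 x)).1
          have q2 := b2 x
          have q3 : 0 < (r x)⁻¹^(p+2) := by have := h0 x; positivity
          have t1 : (p:ℝ) * ((1 - K * δ) * φ) * (iteratedDeriv 2 r x)^2
              ≤ p * (r x)⁻¹^(p+1) * (iteratedDeriv 2 r x)^2 := by
            refine mul_le_mul_of_nonneg_right ?_ (sq_nonneg _)
            refine mul_le_mul_of_nonneg_left ?_ (by positivity)
            linarith
          have t2 : (p * (p+1) : ℝ) * ((r x)⁻¹^(p+2) * ((deriv r x)^2 * iteratedDeriv 2 r x))
              ≤ p * (p+1) * (((1 + K) * (φ * μ⁻¹)) * ((deriv r x)^2 * |iteratedDeriv 2 r x|)) := by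
            refine mul_le_mul_of_nonneg_left ?_ (by positivity)
            exact (mul_le_mul_of_nonneg_left
              (mul_le_mul_of_nonneg_left (le_abs_self _) (sq_nonneg _)) q3.le).trans
              (mul_le_mul_of_nonneg_right q2 (by positivity))
          linarith
      refine this.trans ?_
      rw [intervalIntegral.integral_add ((by fun_prop : Continuous _).intervalIntegrable _ _)
        ((by fun_prop : Continuous _).intervalIntegrable _ _),
        intervalIntegral.integral_const_mul, intervalIntegral.integral_const_mul, ← hDe]
      have := mul_le_mul_of_nonneg_left cub
        (show 0 ≤ (p:ℝ) * (p+1) * ((1 + K) * (φ * μ⁻¹)) by positivity)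
      linarith
    have I2 : -(p * ((1 + K * δ) * φ)) * E ≤ ∫ x in (0:ℝ)..(2 * Real.pi),
        iteratedDeriv 1 r x * iteratedDeriv 1 (fun x => (r x)⁻¹^p) x := by
      rw [hEe, ← intervalIntegral.integral_const_mul]
      refine int_le (by fun_prop) ?_ (fun x => ?_)
      · exact (hr.iter 1).cont.mul (((hr.inv h0).pow p).iter 1).cont
      · rw [d1_upow hr h0, iteratedDeriv_one]
        have q1 := (abs_le.1 (b1 x)).2
        have t1 : (p:ℝ) * (r x)⁻¹^(p+1) * (deriv r x)^2
            ≤ p * ((1 + K * δ) * φ) * (deriv r x)^2 := by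
          refine mul_le_mul_of_nonneg_right ?_ (sq_nonneg _)
          refine mul_le_mul_of_nonneg_left ?_ (by positivity)
          linarith
        linarith
    have I3 : (p * (p+1) * ((1 + K) * (φ * μ⁻¹)) * (δ * μ * D) : ℝ)
        = p * φ * ((p+1) * (1+K) * δ) * D := by
      field_simp
    rw [I3] at I1
    have I4 : -(p * ((1 - K * δ) * φ)) * D + p * φ * ((p+1) * (1+K) * δ) * D
        = -(p * φ * (1 - A1 * δ)) * D := by rw [hA1]; ring
    rw [I4] at I1
    have I5 : (p * φ * (1 - A1 * δ)) * (4 * E) ≤ (p * φ * (1 - A1 * δ)) * D := by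
      refine mul_le_mul_of_nonneg_left hDE ?_
      have : 0 ≤ 1 - A1 * δ := by linarith
      positivity
    have I6 : 0 ≤ K * δ * φ * E := by positivity
    simp only [dE]
    rw [← hEd]
    linarith
  · have hm := mn_close (f := fun x => (r x)⁻¹^p) ((hr.inv h0).pow p).cont
      (fun x => upow_close p hμ hδ0 hδh (hcl x))
    have e : μ⁻¹^p = μ⁻¹^(p+1) * μ := by rw [pow_succ]; field_simp
    have e2 : dM p r - μ * (1 - μ⁻¹^(p+1)) = -(mn (fun x => (r x)⁻¹^p) - μ⁻¹^p) := by
      rw [dM, ← hμd, e]; ring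
    rw [e2, abs_neg]
    refine hm.trans ?_
    rw [e, ← mul_assoc]
    refine mul_le_mul_of_nonneg_right ?_ hμ.le
    refine mul_le_mul_of_nonneg_right ?_ (by positivity)
    refine mul_le_mul_of_nonneg_right ?_ hδ0
    have : 0 ≤ 8 * p * A1 + 2 * p * K := by positivity
    linarith

lemma anti_of {f f' : ℝ → ℝ} (hc : ContinuousOn f (Ici 0))
    (hd : ∀ τ, 0 < τ → HasDerivAt f (f' τ) τ) (h : ∀ τ, 0 < τ → f' τ ≤ 0) :
    AntitoneOn f (Ici 0) := by
  refine antitoneOn_of_deriv_nonpos (convex_Ici 0) hc ?_ ?_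
  · rw [interior_Ici]
    exact fun x hx => (hd x hx).differentiableAt.differentiableWithinAt
  · rw [interior_Ici]
    intro x hx
    rw [(hd x hx).deriv]; exact h x hx

lemma boot {F F' : ℝ → ℝ} {F0 : ℝ} (hc : ContinuousOn F (Ici 0))
    (hd : ∀ τ, 0 < τ → HasDerivAt F (F' τ) τ) (h : ∀ τ, 0 < τ → F τ < F0 → F' τ ≤ 0)
    (h0 : F 0 < F0) : ∀ τ, 0 ≤ τ → F τ < F0 := by
  intro t ht
  by_contra hcon
  push Not at hcon
  have hcl : IsClosed (Icc 0 t ∩ F ⁻¹' (Ici F0)) :=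
    ContinuousOn.preimage_isClosed_of_isClosed (hc.mono Icc_subset_Ici_self) isClosed_Icc
      isClosed_Ici
  have hcomp : IsCompact (Icc 0 t ∩ F ⁻¹' (Ici F0)) :=
    isCompact_Icc.of_isClosed_subset hcl inter_subset_left
  obtain ⟨s, ⟨hs1, hs2⟩, hs3⟩ := hcomp.exists_isLeast ⟨t, ⟨ht, le_refl _⟩, hcon⟩
  have hlt : ∀ x, 0 ≤ x → x < s → F x < F0 := by
    intro x hx hxs
    by_contra hh
    push Not at hh
    exact absurd (hs3 ⟨⟨hx, hxs.le.trans hs1.2⟩, hh⟩) (not_le.2 hxs)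
  have han : AntitoneOn F (Icc 0 s) := by
    refine antitoneOn_of_deriv_nonpos (convex_Icc 0 s) (hc.mono Icc_subset_Ici_self) ?_ ?_
    · rw [interior_Icc]
      exact fun x hx => (hd x hx.1).differentiableAt.differentiableWithinAt
    · rw [interior_Icc]
      intro x hx
      rw [(hd x hx.1).deriv]; exact h x hx.1 (hlt x hx.1.le hx.2)
  have := han ⟨le_refl _, hs1.1⟩ ⟨hs1.1, le_refl _⟩ hs1.1
  have h2 : F0 ≤ F s := hs2
  linarith

lemma hasDeriv_ipow {μ : ℝ → ℝ} {μ' τ : ℝ} (h : HasDerivAt μ μ' τ) (h0 : 0 < μ τ) (n : ℕ) :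
    HasDerivAt (fun s => (μ s)⁻¹^n) (-(n * ((μ τ)⁻¹^n * (μ' / μ τ)))) τ := by
  have := (h.inv h0.ne').pow n
  refine this.congr_deriv ?_
  cases n with
  | zero => simp
  | succ m =>
    simp only [Nat.add_sub_cancel, pow_succ, Pi.inv_apply]
    field_simp

/-- the system of differential inequalities -/
structure Sys (p : ℕ) (C δ1 : ℝ) (E μ E' μ' : ℝ → ℝ) : Prop where
  cE : ContinuousOn E (Ici 0)
  cμ : ContinuousOn μ (Ici 0)
  dE : ∀ τ, 0 < τ → HasDerivAt E (E' τ) τ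
  dμ : ∀ τ, 0 < τ → HasDerivAt μ (μ' τ) τ
  E0 : ∀ τ, 0 ≤ τ → 0 ≤ E τ
  μ0 : ∀ τ, 0 ≤ τ → 0 < μ τ
  key : ∀ τ, 0 < τ → ∀ δ, 0 ≤ δ → δ ≤ δ1 → 2 * Real.pi * E τ ≤ (δ * μ τ)^2 →
    E' τ ≤ (2 - 6 * p * (μ τ)⁻¹^(p+1) + C * δ * (μ τ)⁻¹^(p+1)) * E τ ∧
    |μ' τ - μ τ * (1 - (μ τ)⁻¹^(p+1))| ≤ C * δ * (μ τ)⁻¹^(p+1) * μ τ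

lemma Sys.boot {p : ℕ} (hp : 1 ≤ p) {C δ1 δ0 : ℝ} {E μ E' μ' : ℝ → ℝ} (S : Sys p C δ1 E μ E' μ')
    (h1 : 0 < δ0) (h2 : δ0 ≤ δ1) (h3 : 3 * (C * δ0) ≤ 1)
    (hi : 2 * Real.pi * E 0 < (δ0 * μ 0)^2) :
    ∀ τ, 0 ≤ τ → 2 * Real.pi * E τ ≤ (δ0 * μ τ)^2 := by
  have hp1 : (1:ℝ) ≤ p := by exact_mod_cast hp
  have hpi : 0 < 2 * Real.pi := by positivity
  have eqv : ∀ τ, 0 ≤ τ → (2 * Real.pi * E τ < (δ0 * μ τ)^2 ↔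
      E τ * (μ τ)⁻¹^2 < δ0^2 / (2 * Real.pi)) := by
    intro τ hτ
    have := S.μ0 τ hτ
    rw [lt_div_iff₀ hpi, inv_pow, ← div_eq_mul_inv, div_mul_eq_mul_div, div_lt_iff₀ (by positivity)]
    constructor <;> intro h <;> nlinarith
  have cμ2 : ContinuousOn (fun τ => (μ τ)⁻¹) (Ici 0) :=
    S.cμ.inv₀ (fun τ hτ => (S.μ0 τ hτ).ne')
  have := _root_.boot (F := fun τ => E τ * (μ τ)⁻¹^2) (F0 := δ0^2 / (2 * Real.pi))
    (S.cE.mul (cμ2.pow 2))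
    (fun τ hτ => (S.dE τ hτ).mul (hasDeriv_ipow (S.dμ τ hτ) (S.μ0 τ hτ.le) 2))
    ?_ ((eqv 0 le_rfl).1 hi)
  · intro τ hτ
    exact ((eqv τ hτ).2 (this τ hτ)).le
  · intro τ hτ hF
    have hb := (eqv τ hτ.le).2 hF
    obtain ⟨k1, k2⟩ := S.key τ hτ δ0 h1.le h2 hb.le
    have hμ := S.μ0 τ hτ.le
    have hE := S.E0 τ hτ.le
    have k3 := (abs_le.1 k2).1
    set m := μ τ
    set φ := m⁻¹^(p+1) with hφ
    have hφ0 : 0 < φ := by positivity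
    have k4 : 1 - φ - C * δ0 * φ ≤ μ' τ / m := by
      rw [le_div_iff₀ hμ]; linarith
    have k5 : E' τ - 2 * E τ * (μ' τ / m) ≤ 0 := by
      have := mul_le_mul_of_nonneg_left k4 hE
      have h6 : φ * E τ * (2 - 6 * p + 3 * (C * δ0)) ≤ 0 :=
        mul_nonpos_of_nonneg_of_nonpos (by positivity) (by linarith)
      linarith
    have : E' τ * m⁻¹^2 + E τ * -(((2:ℕ):ℝ) * (m⁻¹^2 * (μ' τ / m)))
      = m⁻¹^2 * (E' τ - 2 * E τ * (μ' τ / m)) := by push_cast; ring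
    simp only [this]
    exact mul_nonpos_of_nonneg_of_nonpos (by positivity) k5

lemma Sys.mu_bound {p : ℕ} {C δ1 δ0 : ℝ} {E μ E' μ' : ℝ → ℝ} (S : Sys p C δ1 E μ E' μ')
    (h1 : 0 < δ0) (h2 : δ0 ≤ δ1) (h3 : 2 * (C * δ0) ≤ 1)
    (hb : ∀ τ, 0 ≤ τ → 2 * Real.pi * E τ ≤ (δ0 * μ τ)^2)
    (hl : Tendsto (fun τ => Real.exp (-τ) * μ τ) atTop (nhds 0)) :
    ∀ τ, 0 ≤ τ → 1/2 ≤ (μ τ)^(p+1) ∧ (μ τ)^(p+1) ≤ 3/2 := by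
  have hz : ∀ κ : ℝ, ∀ τ, 0 < τ → HasDerivAt (fun τ => Real.exp (-((p+1) * τ)) * ((μ τ)^(p+1) - κ))
      ((p+1) * Real.exp (-((p+1) * τ)) * ((μ τ)^p * μ' τ - ((μ τ)^(p+1) - κ))) τ := by
    intro κ τ hτ
    have e1 : HasDerivAt (fun τ : ℝ => Real.exp (-((p+1) * τ)))
        (Real.exp (-((p+1) * τ)) * (-((p+1) * 1))) τ :=
      (((hasDerivAt_id τ).const_mul ((p:ℝ)+1)).neg).exp
    have e2 := ((S.dμ τ hτ).pow (p+1)).sub_const κ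
    refine (e1.mul e2).congr_deriv ?_
    simp only [Nat.add_sub_cancel, Pi.pow_apply]
    push_cast
    ring
  have hcz : ∀ κ : ℝ, ContinuousOn (fun τ => Real.exp (-((p+1) * τ)) * ((μ τ)^(p+1) - κ)) (Ici 0) := by
    intro κ
    refine ContinuousOn.mul (by fun_prop) ((S.cμ.pow _).sub continuousOn_const)
  have hlz : ∀ κ : ℝ, Tendsto (fun τ => Real.exp (-((p+1) * τ)) * ((μ τ)^(p+1) - κ)) atTop (nhds 0) := by
    intro κ
    have e1 : Tendsto (fun τ : ℝ => Real.exp (-τ)) atTop (nhds 0) :=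
      Real.tendsto_exp_neg_atTop_nhds_zero
    have := ((hl.pow (p+1))).sub ((e1.pow (p+1)).mul_const κ)
    simp only [ne_eq, Nat.add_eq_zero_iff, one_ne_zero, and_false, not_false_eq_true, zero_pow,
      zero_mul, sub_zero] at this
    refine this.congr (fun τ => ?_)
    have : Real.exp (-((p+1) * τ)) = Real.exp (-τ)^(p+1) := by
      rw [← Real.exp_nat_mul]; congr 1; push_cast; ring
    rw [this]; ring
  have hk : ∀ τ, 0 < τ → |(μ τ)^p * μ' τ - ((μ τ)^(p+1) - 1)| ≤ 1/2 := by
    intro τ hτ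
    have hμ := S.μ0 τ hτ.le
    have k2 := (S.key τ hτ δ0 h1.le h2 (hb τ hτ.le)).2
    have e : (μ τ)^p * μ' τ - ((μ τ)^(p+1) - 1) =
      (μ τ)^p * (μ' τ - μ τ * (1 - (μ τ)⁻¹^(p+1))) := by
      have : (μ τ)^p * (μ τ * (μ τ)⁻¹^(p+1)) = 1 := by
        rw [← mul_assoc, ← pow_succ, ← mul_pow, mul_inv_cancel₀ hμ.ne', one_pow]
      linear_combination -this
    rw [e, abs_mul, abs_of_pos (pow_pos hμ p)]
    have e3 : (μ τ)^p * (C * δ0 * (μ τ)⁻¹^(p+1) * μ τ) = C * δ0 := by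
      have : (μ τ)^p * (μ τ * (μ τ)⁻¹^(p+1)) = 1 := by
        rw [← mul_assoc, ← pow_succ, ← mul_pow, mul_inv_cancel₀ hμ.ne', one_pow]
      linear_combination (C * δ0) * this
    have := mul_le_mul_of_nonneg_left k2 (pow_pos hμ p).le
    rw [e3] at this
    linarith
  intro τ hτ
  have hex : 0 < Real.exp (-((p+1) * τ)) := Real.exp_pos _
  constructor
  · have an := anti_of (hcz (1/2)) (hz (1/2)) (fun s hs => by
      have := (abs_le.1 (hk s hs)).2
      refine mul_nonpos_of_nonneg_of_nonpos (by positivity) (by linarith))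
    have := le_of_tendsto (hlz (1/2)) (Filter.eventually_atTop.2 ⟨τ, fun s hs =>
      an hτ (hτ.trans hs) hs⟩)
    have := nonneg_of_mul_nonneg_right this hex
    linarith
  · have an := anti_of (hcz (3/2)).neg (fun s hs => (hz (3/2) s hs).neg) (fun s hs => by
      have := (abs_le.1 (hk s hs)).1
      refine neg_nonpos.2 (mul_nonneg (by positivity) (by linarith)))
    have h5 : Tendsto (fun τ => -(Real.exp (-((p+1) * τ)) * ((μ τ)^(p+1) - (3/2:ℝ)))) atTop (nhds 0) := by
      simpa using (hlz (3/2)).neg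
    have := le_of_tendsto h5 (Filter.eventually_atTop.2 ⟨τ, fun s hs =>
      an hτ (hτ.trans hs) hs⟩)
    simp only [Pi.neg_apply] at this
    have : Real.exp (-((p+1) * τ)) * ((μ τ)^(p+1) - 3/2) ≤ 0 := by linarith
    by_contra hcon
    push Not at hcon
    have := mul_pos hex (sub_pos.2 hcon)
    linarith

lemma Sys.anti {p : ℕ} {C δ1 : ℝ} {E μ E' μ' : ℝ → ℝ} (S : Sys p C δ1 E μ E' μ') (hC : 0 ≤ C)
    (hm : ∀ τ, 0 ≤ τ → 1/2 ≤ (μ τ)^(p+1)) {δ h h' : ℝ → ℝ}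
    (hδ : ∀ τ, 0 < τ → 0 ≤ δ τ ∧ δ τ ≤ δ1 ∧ 2 * Real.pi * E τ ≤ (δ τ * μ τ)^2)
    (hh : ∀ τ, HasDerivAt h (h' τ) τ)
    (hs : ∀ τ, 0 < τ → h' τ + 2 * (1 + 6 * p) * C * δ τ ≤ 6 * p - 2) :
    AntitoneOn (fun τ => E τ * (μ τ)⁻¹^(6*p) * Real.exp (h τ)) (Ici 0) := by
  have cμ2 : ContinuousOn (fun τ => (μ τ)⁻¹) (Ici 0) :=
    S.cμ.inv₀ (fun τ hτ => (S.μ0 τ hτ).ne')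
  have ch : Continuous h := continuous_iff_continuousAt.2 (fun τ => (hh τ).continuousAt)
  refine anti_of ((S.cE.mul (cμ2.pow _)).mul (Real.continuous_exp.comp ch).continuousOn)
    (fun τ hτ => ((S.dE τ hτ).mul (hasDeriv_ipow (S.dμ τ hτ) (S.μ0 τ hτ.le) (6*p))).mul (hh τ).exp) ?_
  intro τ hτ
  obtain ⟨d1, d2, d3⟩ := hδ τ hτ
  obtain ⟨k1, k2⟩ := S.key τ hτ (δ τ) d1 d2 d3
  have hμ := S.μ0 τ hτ.le
  have hE := S.E0 τ hτ.le
  have k3 := (abs_le.1 k2).1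
  have hw := hm τ hτ.le
  have hst := hs τ hτ
  simp only [Pi.mul_apply]
  set m := μ τ
  set φ := m⁻¹^(p+1) with hφ
  have hφ0 : 0 < φ := by positivity
  have hφ2 : φ ≤ 2 := by
    rw [hφ, inv_pow]
    exact inv_le_of_inv_le₀ (by norm_num) (by linarith)
  have k4 : 1 - φ - C * δ τ * φ ≤ μ' τ / m := by
    rw [le_div_iff₀ hμ]; linarith
  have k5 : E' τ - 6 * p * E τ * (μ' τ / m) + E τ * h' τ ≤ 0 := by
    have a1 := mul_le_mul_of_nonneg_left k4 (show 0 ≤ 6 * p * E τ by positivity)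
    have a2 : (1 + 6 * p) * C * δ τ * φ ≤ (1 + 6 * p) * C * δ τ * 2 :=
      mul_le_mul_of_nonneg_left hφ2 (by positivity)
    have a3 : E τ * (2 - 6 * p + h' τ + (1 + 6 * p) * C * δ τ * φ) ≤ 0 :=
      mul_nonpos_of_nonneg_of_nonpos hE (by linarith)
    linarith
  have e : (E' τ * m⁻¹^(6*p) + E τ * -(((6*p:ℕ):ℝ) * (m⁻¹^(6*p) * (μ' τ / m)))) * Real.exp (h τ)
      + E τ * m⁻¹^(6*p) * (Real.exp (h τ) * h' τ)
      = m⁻¹^(6*p) * Real.exp (h τ) * (E' τ - 6 * p * E τ * (μ' τ / m) + E τ * h' τ) := by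
    push_cast; ring
  rw [e]
  exact mul_nonpos_of_nonneg_of_nonpos (by positivity) k5

lemma Sys.decay {p : ℕ} (hp : 1 ≤ p) {C δ1 δ0 : ℝ} {E μ E' μ' : ℝ → ℝ} (S : Sys p C δ1 E μ E' μ')
    (hC : 0 ≤ C) (h1 : 0 < δ0) (h2 : δ0 ≤ δ1) (h3 : 2 * (1 + 6 * p) * C * δ0 ≤ 1)
    (hb : ∀ τ, 0 ≤ τ → 2 * Real.pi * E τ ≤ (δ0 * μ τ)^2)
    (hm : ∀ τ, 0 ≤ τ → 1/2 ≤ (μ τ)^(p+1)) {B b : ℝ} (hb0 : 0 < b)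
    (hB : ∀ τ, 0 ≤ τ → b ≤ μ τ ∧ μ τ ≤ B) :
    ∃ M : ℝ, 0 ≤ M ∧ ∀ τ, 0 ≤ τ → E τ ≤ M * Real.exp (-(6 * p - 2) * τ) := by
  have hp1 : (1:ℝ) ≤ p := by exact_mod_cast hp
  have hB0 : 0 < B := hb0.trans_le ((hB 0 le_rfl).1.trans (hB 0 le_rfl).2)
  have fin : ∀ (P : ℝ) (h : ℝ → ℝ), (∀ τ, 0 ≤ τ → E τ * (μ τ)⁻¹^(6*p) * Real.exp (h τ) ≤ P) →
      ∀ τ, 0 ≤ τ → E τ ≤ P * B^(6*p) * Real.exp (-h τ) := by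
    intro P h hP τ hτ
    have hμ := S.μ0 τ hτ
    have hE := S.E0 τ hτ
    have a := hP τ hτ
    have hP0 : 0 ≤ P := le_trans (by positivity) a
    have e : E τ = (E τ * (μ τ)⁻¹^(6*p) * Real.exp (h τ)) * (μ τ)^(6*p) * Real.exp (-h τ) := by
      rw [Real.exp_neg, inv_pow]
      have := Real.exp_pos (h τ)
      field_simp
    rw [e]
    refine mul_le_mul_of_nonneg_right ?_ (Real.exp_pos _).le
    exact mul_le_mul a (pow_le_pow_left₀ hμ.le (hB τ hτ).2 _) (by positivity) hP0
  have A1 := S.anti hC hm (δ := fun _ => δ0) (h := fun τ => 3 * τ) (h' := fun _ => 3 * 1)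
    (fun τ hτ => ⟨h1.le, h2, hb τ hτ.le⟩) (fun τ => (hasDerivAt_id τ).const_mul 3)
    (fun τ hτ => by linarith)
  have A2 := fin _ _ (fun τ hτ => A1 (self_mem_Ici) hτ hτ)
  set P1 := (E 0 * (μ 0)⁻¹^(6*p) * Real.exp (3 * 0)) * B^(6*p) with hP1
  have hP10 : 0 ≤ P1 := by
    have := S.E0 0 le_rfl
    have := S.μ0 0 le_rfl
    positivity
  set K := √(2 * Real.pi * P1) / b with hK
  have hKn : 0 ≤ K := by positivity
  have hδ : ∀ τ, 0 ≤ τ → √(2 * Real.pi * E τ) / μ τ ≤ K * Real.exp (-τ) := by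
    intro τ hτ
    have hμ := S.μ0 τ hτ
    rw [hK, div_mul_eq_mul_div]
    refine div_le_div₀ (by positivity) ?_ hb0 (hB τ hτ).1
    have : Real.exp (-τ) = √(Real.exp (-(2*τ))) := by
      rw [show -(2*τ) = -τ + -τ by ring, Real.exp_add, Real.sqrt_mul_self (Real.exp_pos _).le]
    rw [this, ← Real.sqrt_mul (by positivity)]
    apply Real.sqrt_le_sqrt
    have h5 : Real.exp (-(3*τ)) ≤ Real.exp (-(2*τ)) := Real.exp_le_exp.2 (by linarith)
    calc 2 * Real.pi * E τ ≤ 2 * Real.pi * (P1 * Real.exp (-(3*τ))) :=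
          mul_le_mul_of_nonneg_left (A2 τ hτ) (by positivity)
      _ ≤ 2 * Real.pi * (P1 * Real.exp (-(2*τ))) := by gcongr
      _ = _ := by ring
  set G := 2 * (1 + 6 * p) * C with hG
  have hG0 : 0 ≤ G := by positivity
  have B1 := S.anti hC hm (δ := fun τ => √(2 * Real.pi * E τ) / μ τ)
    (h := fun τ => (6 * p - 2) * τ + G * K * Real.exp (-τ))
    (h' := fun τ => (6 * p - 2) * 1 + G * K * (Real.exp (-τ) * (-1)))
    (fun τ hτ => by
      have hμ := S.μ0 τ hτ.le
      have hE := S.E0 τ hτ.le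
      refine ⟨by positivity, ?_, ?_⟩
      · refine le_trans ?_ h2
        rw [div_le_iff₀ hμ]
        exact Real.sqrt_le_iff.2 ⟨by positivity, hb τ hτ.le⟩
      · rw [div_mul_cancel₀ _ hμ.ne', Real.sq_sqrt (by positivity)])
    (fun τ => ((hasDerivAt_id τ).const_mul _).add (((hasDerivAt_id τ).neg.exp).const_mul _))
    (fun τ hτ => by
      have := mul_le_mul_of_nonneg_left (hδ τ hτ.le) hG0
      linarith)
  have B2 := fin _ _ (fun τ hτ => B1 (self_mem_Ici) hτ hτ)
  set P2 := (fun τ => E τ * (μ τ)⁻¹ ^ (6 * p) * rexp ((6 * p - 2) * τ + G * K * rexp (-τ))) 0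
    * B ^ (6 * p) with hP2
  have hP20 : 0 ≤ P2 := by
    have := S.E0 0 le_rfl
    have := S.μ0 0 le_rfl
    rw [hP2]; simp only; positivity
  refine ⟨P2, hP20, fun τ hτ => (B2 τ hτ).trans ?_⟩
  refine mul_le_mul_of_nonneg_left (Real.exp_le_exp.2 ?_) hP20
  have : 0 ≤ G * K * Real.exp (-τ) := by positivity
  linarith

/-- the rescaled flow, written for the radius of curvature -/
structure RFlow (p : ℕ) (r : ℝ → ℝ → ℝ) : Prop where
  sm : SM r
  per : ∀ θ τ, r (θ + 2 * Real.pi) τ = r θ τ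
  pos : ∀ θ τ, 0 ≤ τ → 0 < r θ τ
  pde : ∀ θ τ, 0 < τ → HasDerivAt (fun s => r θ s)
    (r θ τ - iteratedDeriv 2 (fun x => (r x τ)⁻¹^p) θ - (r θ τ)⁻¹^p) τ
  c1 : ∀ τ, 0 ≤ τ → fCoeff (fun x => r x τ) 1 = 0
  c2 : ∀ τ, 0 ≤ τ → fCoeff (fun x => r x τ) (-1) = 0
  blow : ∀ M : ℝ, ∃ τ0, ∀ τ, τ0 ≤ τ → ∃ θ, M ≤ Real.exp τ * (r θ τ)⁻¹

lemma RFlow.sp {p : ℕ} {r : ℝ → ℝ → ℝ} (F : RFlow p r) {τ : ℝ} (h : 0 ≤ τ) : SP (fun x => r x τ) :=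
  ⟨F.sm.slice h, fun x => F.per x τ⟩

lemma RFlow.cont_en {p : ℕ} {r : ℝ → ℝ → ℝ} (F : RFlow p r) (l : ℕ) :
    ContinuousOn (fun s => en l (fun x => r x s)) (Ici 0) :=
  ((F.sm.iter l).pow 2).cont_int

lemma RFlow.cont_mn {p : ℕ} {r : ℝ → ℝ → ℝ} (F : RFlow p r) :
    ContinuousOn (fun s => mn (fun x => r x s)) (Ici 0) :=
  continuousOn_const.mul F.sm.cont_int

lemma RFlow.hasDeriv_mn {p : ℕ} {r : ℝ → ℝ → ℝ} (F : RFlow p r) {τ : ℝ} (h : 0 < τ) :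
    HasDerivAt (fun s => mn (fun x => r x s)) (dM p (fun x => r x τ)) τ := by
  have h1 := (F.sm.hasDeriv_int h (fun θ => F.pde θ τ h)).const_mul (2 * Real.pi)⁻¹
  refine h1.congr_deriv ?_
  have hr := F.sp h.le
  have hv : SP (fun x => (r x τ)⁻¹^p) := (hr.inv (fun x => F.pos x τ h.le)).pow p
  have e : ∫ x in (0:ℝ)..(2 * Real.pi), iteratedDeriv 2 (fun x => (r x τ)⁻¹^p) x = 0 := by
    rw [iteratedDeriv_succ]
    exact int_deriv (hv.iter 1)
  rw [intervalIntegral.integral_sub ((hr.ii _ _).sub ((hv.iter 2).ii _ _)) (hv.ii _ _),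
    intervalIntegral.integral_sub (hr.ii _ _) ((hv.iter 2).ii _ _), e, dM, mn, mn]
  ring

lemma RFlow.hasDeriv_en {p : ℕ} {r : ℝ → ℝ → ℝ} (F : RFlow p r) {τ : ℝ} (h : 0 < τ) (l : ℕ) :
    HasDerivAt (fun s => en l (fun x => r x s)) (dE p l (fun x => r x τ)) τ := by
  have hr := F.sp h.le
  have hv : SP (fun x => (r x τ)⁻¹^p) := (hr.inv (fun x => F.pos x τ h.le)).pow p
  have h1 := fun θ => ((F.sm.swap_iter h (fun θ => F.pde θ τ h) l) θ).pow 2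
  have h2 := ((F.sm.iter l).pow 2).hasDeriv_int h h1
  refine h2.congr_deriv ?_
  have e1 : ∀ θ, iteratedDeriv l (fun θ => r θ τ - iteratedDeriv 2 (fun x => (r x τ)⁻¹^p) θ
      - (r θ τ)⁻¹^p) θ = iteratedDeriv l (fun x => r x τ) θ
        - iteratedDeriv (l+2) (fun x => (r x τ)⁻¹^p) θ - iteratedDeriv l (fun x => (r x τ)⁻¹^p) θ := by
    intro θ
    have cl : ∀ f : ℝ → ℝ, SP f → ContDiffAt ℝ l f θ :=
      fun f hf => (hf.1.of_le (by exact_mod_cast le_top)).contDiffAt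
    have := iteratedDeriv_sub (n := l) (x := θ) ((cl _ hr).sub (cl _ (hv.iter 2))) (cl _ hv)
    have e2 := iteratedDeriv_sub (n := l) (x := θ) (cl _ hr) (cl _ (hv.iter 2))
    have e3 : iteratedDeriv l (iteratedDeriv 2 (fun x => (r x τ)⁻¹^p))
        = iteratedDeriv (l+2) (fun x => (r x τ)⁻¹^p) := by
      simp only [iteratedDeriv_eq_iterate, ← Function.iterate_add_apply]
    rw [e3] at e2
    exact this.trans (congrArg (fun z => z - _) e2)
  have e2 : ∫ x in (0:ℝ)..(2 * Real.pi), iteratedDeriv l (fun x => r x τ) x *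
      iteratedDeriv (l+2) (fun x => (r x τ)⁻¹^p) x = -∫ x in (0:ℝ)..(2 * Real.pi),
        iteratedDeriv (l+1) (fun x => r x τ) x * iteratedDeriv (l+1) (fun x => (r x τ)⁻¹^p) x := by
    have := ibp (hr.iter l) (hv.iter (l+1))
    simp only [← iteratedDeriv_succ] at this
    exact this
  have i1 := ((hr.iter l).mul (hr.iter l)).ii 0 (2 * Real.pi)
  have i2 := ((hr.iter l).mul (hv.iter (l+2))).ii 0 (2 * Real.pi)
  have i3 := ((hr.iter l).mul (hv.iter l)).ii 0 (2 * Real.pi)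
  have e4 : ∀ x, ((2:ℕ):ℝ) * iteratedDeriv l (fun x => r x τ) x ^ (2 - 1) *
      iteratedDeriv l (fun θ => r θ τ - iteratedDeriv 2 (fun x => (r x τ)⁻¹^p) θ - (r θ τ)⁻¹^p) x
      = 2 * (iteratedDeriv l (fun x => r x τ) x * iteratedDeriv l (fun x => r x τ) x
        - iteratedDeriv l (fun x => r x τ) x * iteratedDeriv (l+2) (fun x => (r x τ)⁻¹^p) x
        - iteratedDeriv l (fun x => r x τ) x * iteratedDeriv l (fun x => (r x τ)⁻¹^p) x) := by
    intro x
    rw [e1]; push_cast; ring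
  simp only [e4]
  rw [intervalIntegral.integral_const_mul, intervalIntegral.integral_sub (i1.sub i2) i3,
    intervalIntegral.integral_sub i1 i2, e2, dE, en]
  simp only [sq]
  ring

lemma RFlow.main1 (p : ℕ) (hp : 1 ≤ p) : ∃ ε0 : ℝ, 0 < ε0 ∧ ∀ r : ℝ → ℝ → ℝ, RFlow p r →
    2 * Real.pi * en 1 (fun x => r x 0) < (ε0 * mn (fun x => r x 0))^2 →
    (∃ M : ℝ, 0 ≤ M ∧ ∀ τ, 0 ≤ τ → en 1 (fun x => r x τ) ≤ M * Real.exp (-(6 * p - 2) * τ)) ∧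
    ∃ b B : ℝ, 0 < b ∧ ∀ θ τ, 0 ≤ τ → b ≤ (r θ τ)⁻¹ ∧ (r θ τ)⁻¹ ≤ B := by
  obtain ⟨C, hC, δ1, hδ1, hδh, key⟩ := fixed_time p hp
  have hp1 : (1:ℝ) ≤ p := by exact_mod_cast hp
  set G := 2 * (1 + 6 * p) * (C + 1) with hG
  have hG0 : 0 < G := by positivity
  set δ0 := min δ1 (1 / G) with hδ0
  have d0 : 0 < δ0 := by positivity
  have d1 : δ0 ≤ δ1 := min_le_left _ _
  have d2 : G * δ0 ≤ 1 := by
    have : δ0 ≤ 1 / G := min_le_right _ _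
    rwa [le_div_iff₀ hG0, mul_comm] at this
  have hCd : 0 ≤ C * δ0 := by positivity
  have hpCd : C * δ0 ≤ p * (C * δ0) := by nlinarith
  have hpd : 0 ≤ p * δ0 := by positivity
  have d3 : 2 * (1 + 6 * p) * C * δ0 ≤ 1 := by
    rw [hG] at d2; nlinarith
  have d4 : 3 * (C * δ0) ≤ 1 := by nlinarith
  refine ⟨δ0, d0, fun r F hi => ?_⟩
  have S : Sys p C δ1 (fun τ => en 1 (fun x => r x τ)) (fun τ => mn (fun x => r x τ))
      (fun τ => dE p 1 (fun x => r x τ)) (fun τ => dM p (fun x => r x τ)) :=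
    { cE := F.cont_en 1
      cμ := F.cont_mn
      dE := fun τ hτ => F.hasDeriv_en hτ 1
      dμ := fun τ hτ => F.hasDeriv_mn hτ
      E0 := fun τ _ => en_nonneg _ _
      μ0 := fun τ hτ => mn_pos (F.sp hτ).cont (fun x => F.pos x τ hτ)
      key := fun τ hτ δ a1 a2 a3 =>
        (key _ δ (F.sp hτ.le) (fun x => F.pos x τ hτ.le) (F.c1 τ hτ.le) (F.c2 τ hτ.le) a1 a2 a3).2 }
  have hb := S.boot hp d0 d1 d4 hi
  have hcl : ∀ τ, 0 ≤ τ → ∀ x, |r x τ - mn (fun x => r x τ)| ≤ δ0 * mn (fun x => r x τ) :=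
    fun τ hτ => (key _ δ0 (F.sp hτ) (fun x => F.pos x τ hτ) (F.c1 τ hτ) (F.c2 τ hτ) d0.le d1
      (hb τ hτ)).1
  have hr : ∀ τ, 0 ≤ τ → ∀ x, 1/2 * mn (fun x => r x τ) ≤ r x τ ∧ r x τ ≤ 3/2 * mn (fun x => r x τ) := by
    intro τ hτ x
    have h1 := abs_le.1 (hcl τ hτ x)
    have h2 := S.μ0 τ hτ
    have : δ0 * mn (fun x => r x τ) ≤ 1/2 * mn (fun x => r x τ) :=
      mul_le_mul_of_nonneg_right (d1.trans hδh) h2.le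
    constructor <;> linarith
  have hl : Tendsto (fun τ => Real.exp (-τ) * mn (fun x => r x τ)) atTop (nhds 0) := by
    rw [Metric.tendsto_atTop]
    intro ε hε
    obtain ⟨τ0, h0⟩ := F.blow (4 / ε)
    refine ⟨max τ0 0, fun τ hτ => ?_⟩
    have hτ0 : 0 ≤ τ := (le_max_right _ _).trans hτ
    obtain ⟨θ, hθ⟩ := h0 τ ((le_max_left _ _).trans hτ)
    have h1 := (hr τ hτ0 θ).1
    have h2 := S.μ0 τ hτ0
    have h3 := F.pos θ τ hτ0
    have h4 := Real.exp_pos τ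
    rw [Real.dist_eq, sub_zero, abs_of_pos (mul_pos (Real.exp_pos _) h2), Real.exp_neg]
    rw [← div_eq_mul_inv, div_le_div_iff₀ hε h3] at hθ
    rw [inv_mul_lt_iff₀ h4]
    nlinarith
  have hm := S.mu_bound d0 d1 (by linarith) hb hl
  have hmb : ∀ τ, 0 ≤ τ → 1/2 ≤ mn (fun x => r x τ) ∧ mn (fun x => r x τ) ≤ 3/2 := by
    intro τ hτ
    obtain ⟨m1, m2⟩ := hm τ hτ
    have h2 := S.μ0 τ hτ
    constructor
    · by_contra hcon
      push Not at hcon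
      have := pow_le_of_le_one h2.le (by linarith) (by omega : p + 1 ≠ 0)
      linarith
    · by_contra hcon
      push Not at hcon
      have := le_self_pow₀ (by linarith : 1 ≤ mn (fun x => r x τ)) (by omega : p + 1 ≠ 0)
      linarith
  refine ⟨S.decay hp hC d0 d1 d3 hb (fun τ hτ => (hm τ hτ).1) (by norm_num : (0:ℝ) < 1/2) hmb,
    (9/4)⁻¹, (1/4)⁻¹, by norm_num, fun θ τ hτ => ?_⟩
  obtain ⟨r1, r2⟩ := hr τ hτ θ
  obtain ⟨m1, m2⟩ := hmb τ hτ
  constructor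
  · exact inv_anti₀ (F.pos θ τ hτ) (by linarith)
  · exact inv_anti₀ (by norm_num) (by linarith)

lemma dE_bound {l : ℕ} (hl : 2 ≤ l) {p : ℕ} (hp : 1 ≤ p) {A b B : ℝ} (hA : 0 ≤ A) (hb : 0 < b)
    (hB : 0 ≤ B) (K : ℝ) (hK : 0 ≤ K) : ∃ C : ℝ, 0 ≤ C ∧ ∀ r : ℝ → ℝ, SP r → (∀ x, 0 < r x) →
    (∀ x, b ≤ (r x)⁻¹) → (∀ x, (r x)⁻¹ ≤ B) → (∀ j, 1 ≤ j → j ≤ l - 1 → en j r ≤ A) →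
    dE p l r ≤ -K * en l r + C * en 1 r := by
  have hp1 : (1:ℝ) ≤ p := by exact_mod_cast hp
  set a : ℝ := p * b^(p+1) with ha
  have ha0 : 0 < a := by positivity
  set η := min (a^2/8) (a/4) with hη
  have hη0 : 0 < η := by positivity
  have hη1 : η ≤ a^2/8 := min_le_left _ _
  have hη2 : η ≤ a/4 := min_le_right _ _
  obtain ⟨C1, hC1, key⟩ := cmt_energy hl hA hB p η hη0
  obtain ⟨C2, hC2, key2⟩ := interp_le (by omega : 1 ≤ l) le_rfl (a / (3 + K)) (by positivity)
  refine ⟨2 / a * C1 + C1 + (3 + K) * C2, by positivity, fun r hr h0 hbr hBr hj => ?_⟩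
  obtain ⟨k1, k2⟩ := key r hr h0 hBr hj
  have k3 := key2 r hr
  have hv : SP (fun x => (r x)⁻¹^p) := (hr.inv h0).pow p
  have cl := (hr.iter l).cont
  have cl1 := (hr.iter (l+1)).cont
  have cv := (hv.iter l).cont
  have cv1 := (hv.iter (l+1)).cont
  have cc := cmt_cont hr h0 p l
  have I1 : 2 * (∫ x in (0:ℝ)..(2 * Real.pi),
      iteratedDeriv (l+1) r x * iteratedDeriv (l+1) (fun x => (r x)⁻¹^p) x)
      ≤ (-(2 * a) + a / 2) * en (l+1) r + 2 / a * ∫ x in (0:ℝ)..(2 * Real.pi), cmt p l r x ^ 2 := by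
    rw [en, ← intervalIntegral.integral_const_mul, ← intervalIntegral.integral_const_mul,
      ← intervalIntegral.integral_const_mul,
      ← intervalIntegral.integral_add ((by fun_prop : Continuous _).intervalIntegrable _ _)
        ((by fun_prop : Continuous _).intervalIntegrable _ _)]
    refine int_le (by fun_prop) (by fun_prop) (fun x => ?_)
    have e : iteratedDeriv (l+1) (fun x => (r x)⁻¹^p) x
        = cmt p l r x - p * ((r x)⁻¹^(p+1) * iteratedDeriv (l+1) r x) := by
      simp only [cmt]; ring
    rw [e]
    set y := iteratedDeriv (l+1) r x
    set z := cmt p l r x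
    have q1 : a * y^2 ≤ p * (r x)⁻¹^(p+1) * y^2 := by
      refine mul_le_mul_of_nonneg_right ?_ (sq_nonneg _)
      rw [ha]
      refine mul_le_mul_of_nonneg_left ?_ (by positivity)
      exact pow_le_pow_left₀ hb.le (hbr x) _
    have q2 : 2 * (y * z) ≤ a / 2 * y^2 + 2 / a * z^2 := by
      have h := sq_nonneg (a / 2 * y - z)
      have : a / 2 * y^2 + 2 / a * z^2 - 2 * (y * z) = 2 / a * (a / 2 * y - z)^2 := by
        field_simp; ring
      have h2 : 0 ≤ 2 / a * (a / 2 * y - z)^2 := by positivity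
      linarith
    nlinarith
  have I2 : - (en l r + en l (fun x => (r x)⁻¹^p)) ≤ 2 * ∫ x in (0:ℝ)..(2 * Real.pi),
      iteratedDeriv l r x * iteratedDeriv l (fun x => (r x)⁻¹^p) x := by
    rw [en, en, ← intervalIntegral.integral_const_mul,
      ← intervalIntegral.integral_add ((by fun_prop : Continuous _).intervalIntegrable _ _)
        ((by fun_prop : Continuous _).intervalIntegrable _ _), ← intervalIntegral.integral_neg]
    refine int_le (by fun_prop) (by fun_prop) (fun x => ?_)
    nlinarith [sq_nonneg (iteratedDeriv l r x + iteratedDeriv l (fun x => (r x)⁻¹^p) x)]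
  have e1 := en_nonneg 1 r
  have e2 := en_nonneg (l+1) r
  have I3 : 2 / a * (∫ x in (0:ℝ)..(2 * Real.pi), cmt p l r x ^ 2)
      ≤ a / 4 * en (l+1) r + 2 / a * C1 * en 1 r := by
    have := mul_le_mul_of_nonneg_left k1 (show 0 ≤ 2 / a by positivity)
    have h2 : 2 / a * (η * en (l+1) r) ≤ a / 4 * en (l+1) r := by
      rw [← mul_assoc]
      refine mul_le_mul_of_nonneg_right ?_ e2
      rw [div_mul_eq_mul_div, div_le_iff₀ ha0]; nlinarith
    linarith
  have I4 : η * en (l+1) r ≤ a / 4 * en (l+1) r := mul_le_mul_of_nonneg_right hη2 e2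
  have I5 : (3 + K) * en l r ≤ a * en (l+1) r + (3 + K) * C2 * en 1 r := by
    have := mul_le_mul_of_nonneg_left k3 (show 0 ≤ 3 + K by positivity)
    have h3 : (3 + K) * (a / (3 + K) * en (l+1) r) = a * en (l+1) r := by
      have : 0 < 3 + K := by positivity
      field_simp
    linarith
  simp only [dE]
  linarith

lemma RFlow.higher {p : ℕ} (hp : 1 ≤ p) {r : ℝ → ℝ → ℝ} (F : RFlow p r)
    (h1 : ∃ M : ℝ, 0 ≤ M ∧ ∀ τ, 0 ≤ τ → en 1 (fun x => r x τ) ≤ M * Real.exp (-(6 * p - 2) * τ))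
    {b B : ℝ} (hb : 0 < b) (hB : ∀ θ τ, 0 ≤ τ → b ≤ (r θ τ)⁻¹ ∧ (r θ τ)⁻¹ ≤ B) (l : ℕ) : 1 ≤ l →
    ∃ M : ℝ, 0 ≤ M ∧ ∀ τ, 0 ≤ τ → en l (fun x => r x τ) ≤ M * Real.exp (-(6 * p - 2) * τ) := by
  have hp1 : (1:ℝ) ≤ p := by exact_mod_cast hp
  induction l using Nat.strong_induction_on with
  | _ l ih =>
    intro hl
    rcases Nat.eq_or_lt_of_le hl with rfl | hl2
    · exact h1
    · have hl2 : 2 ≤ l := hl2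
      have hA : ∃ A : ℝ, 0 ≤ A ∧ ∀ τ, 0 ≤ τ → ∀ j, 1 ≤ j → j ≤ l - 1 →
          en j (fun x => r x τ) ≤ A := by
        have : ∀ j, ∃ M : ℝ, 0 ≤ M ∧ (1 ≤ j → j ≤ l - 1 → ∀ τ, 0 ≤ τ →
            en j (fun x => r x τ) ≤ M) := by
          intro j
          by_cases hj : 1 ≤ j ∧ j ≤ l - 1
          · obtain ⟨M, hM, hM2⟩ := ih j (by omega) hj.1
            refine ⟨M, hM, fun _ _ τ hτ => (hM2 τ hτ).trans ?_⟩
            refine mul_le_of_le_one_right hM (Real.exp_le_one_iff.2 ?_)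
            have : 0 ≤ (6 * (p:ℝ) - 2) * τ := mul_nonneg (by linarith) hτ
            linarith
          · exact ⟨0, le_rfl, fun a c => absurd ⟨a, c⟩ hj⟩
        choose M hM0 hM using this
        refine ⟨∑ j ∈ Finset.range l, M j, Finset.sum_nonneg (fun j _ => hM0 j), ?_⟩
        intro τ hτ j j1 j2
        exact (hM j j1 j2 τ hτ).trans (Finset.single_le_sum (f := M) (fun j _ => hM0 j)
          (Finset.mem_range.2 (by omega)))
      obtain ⟨A, hA0, hA⟩ := hA
      have hB0 : 0 ≤ B := hb.le.trans ((hB 0 0 le_rfl).1.trans (hB 0 0 le_rfl).2)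
      obtain ⟨C, hC, key⟩ := dE_bound hl2 hp hA0 hb hB0 (6 * p - 1) (by linarith)
      obtain ⟨M, hM, hM2⟩ := h1
      set γ : ℝ := 6 * p - 2 with hγ
      set Q := C * M with hQ
      have hQ0 : 0 ≤ Q := by positivity
      have an := anti_of
        (f := fun τ => (en l (fun x => r x τ) * Real.exp (γ * τ) - Q) * Real.exp τ)
        (((F.cont_en l).mul (by fun_prop)).sub continuousOn_const |>.mul (by fun_prop))
        (fun τ hτ => (((F.hasDeriv_en hτ l).mul
          (((hasDerivAt_id τ).const_mul γ).exp)).sub_const Q).mul (Real.hasDerivAt_exp τ))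
        (fun τ hτ => by
          have d := key _ (F.sp hτ.le) (fun x => F.pos x τ hτ.le) (fun x => (hB x τ hτ.le).1)
            (fun x => (hB x τ hτ.le).2) (hA τ hτ.le)
          have m := mul_le_mul_of_nonneg_left (hM2 τ hτ.le) hC
          simp only [id, Pi.mul_apply]
          set e := en l (fun x => r x τ)
          set X := Real.exp (γ * τ) with hX
          have hX0 : 0 < X := Real.exp_pos _
          have hXi : Real.exp (-γ * τ) * X = 1 := by
            rw [hX, ← Real.exp_add]; simp
          have h5 : (dE p l (fun x => r x τ) + (γ + 1) * e) * X ≤ Q := by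
            have : dE p l (fun x => r x τ) + (γ + 1) * e ≤ Q * Real.exp (-γ * τ) := by
              rw [hγ, hQ]; rw [hγ] at m; linarith
            calc _ ≤ Q * Real.exp (-γ * τ) * X := mul_le_mul_of_nonneg_right this hX0.le
              _ = Q := by rw [mul_assoc, hXi, mul_one]
          have h6 : (dE p l (fun x => r x τ) * X + e * (X * (γ * 1))) * Real.exp τ
              + (e * X - Q) * Real.exp τ
              = ((dE p l (fun x => r x τ) + (γ + 1) * e) * X - Q) * Real.exp τ := by ring
          rw [h6]
          exact mul_nonpos_of_nonpos_of_nonneg (by linarith) (Real.exp_pos _).le)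
      refine ⟨en l (fun x => r x 0) + Q, add_nonneg (en_nonneg _ _) hQ0, fun τ hτ => ?_⟩
      have h7 := an self_mem_Ici hτ hτ
      simp only [mul_zero, Real.exp_zero, mul_one] at h7
      have h8 : 1 ≤ Real.exp τ := Real.one_le_exp hτ
      have e0 := en_nonneg l (fun x => r x 0)
      have h9 : en l (fun x => r x τ) * Real.exp (γ * τ) - Q ≤ en l (fun x => r x 0) := by
        by_contra hcon
        push Not at hcon
        nlinarith
      have h10 : en l (fun x => r x τ) =
          en l (fun x => r x τ) * Real.exp (γ * τ) * Real.exp (-γ * τ) := by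
        rw [mul_assoc, ← Real.exp_add]; simp
      rw [h10]
      exact mul_le_mul_of_nonneg_right (by linarith) (Real.exp_pos _).le

lemma RFlow.sup_r {p : ℕ} {r : ℝ → ℝ → ℝ} (F : RFlow p r)
    (hh : ∀ l, 1 ≤ l → ∃ M : ℝ, 0 ≤ M ∧ ∀ τ, 0 ≤ τ →
      en l (fun x => r x τ) ≤ M * Real.exp (-(6 * p - 2) * τ)) (j : ℕ) :
    ∃ C : ℝ, 0 ≤ C ∧ (1 ≤ j → ∀ τ, 0 ≤ τ → ∀ x, |iteratedDeriv j (fun x => r x τ) x|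
      ≤ C * Real.exp (-(3 * p - 1) * τ)) := by
  obtain ⟨M, hM, hM2⟩ := hh (j+1) (by omega)
  refine ⟨√(2 * Real.pi * M), by positivity, fun hj τ hτ x => ?_⟩
  refine abs_le_of_sq_le_sq ?_ (by positivity)
  have := sup_sq (F.sp hτ) hj x
  rw [mul_pow, Real.sq_sqrt (by positivity), ← Real.exp_nat_mul]
  refine this.trans ?_
  have h2 := mul_le_mul_of_nonneg_left (hM2 τ hτ) (show 0 ≤ 2 * Real.pi by positivity)
  refine h2.trans (le_of_eq ?_)
  rw [show ((2:ℕ):ℝ) * (-(3 * p - 1) * τ) = -(6 * p - 2) * τ by push_cast; ring]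
  ring

lemma RFlow.sup_u {p : ℕ} (hp : 1 ≤ p) {r : ℝ → ℝ → ℝ} (F : RFlow p r)
    (hh : ∀ l, 1 ≤ l → ∃ M : ℝ, 0 ≤ M ∧ ∀ τ, 0 ≤ τ →
      en l (fun x => r x τ) ≤ M * Real.exp (-(6 * p - 2) * τ))
    {B : ℝ} (hB0 : 0 ≤ B) (hB : ∀ θ τ, 0 ≤ τ → (r θ τ)⁻¹ ≤ B) (j : ℕ) (hj : 1 ≤ j) :
    ∃ C : ℝ, 0 ≤ C ∧ ∀ τ, 0 ≤ τ → ∀ x, |iteratedDeriv j (fun x => (r x τ)⁻¹) x|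
      ≤ C * Real.exp (-(3 * p - 1) * τ) := by
  have hp1 : (1:ℝ) ≤ p := by exact_mod_cast hp
  choose C hC0 hC using F.sup_r hh
  set A := ∑ i ∈ Finset.range (j+1), C i with hA
  have hA0 : 0 ≤ A := Finset.sum_nonneg (fun i _ => hC0 i)
  have hCA : ∀ i, i ≤ j → C i ≤ A := fun i hi =>
    Finset.single_le_sum (f := C) (fun i _ => hC0 i) (Finset.mem_range.2 (by omega))
  obtain ⟨D, hD, key⟩ := compA hj hA0 hB0 j (by omega) 1
  refine ⟨D * (j * A), by positivity, fun τ hτ x => ?_⟩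
  have hex1 : Real.exp (-(3 * p - 1) * τ) ≤ 1 := by
    rw [Real.exp_le_one_iff]
    have : 0 ≤ (3 * (p:ℝ) - 1) * τ := mul_nonneg (by linarith) hτ
    linarith
  have hex0 := Real.exp_pos (-(3 * p - 1) * τ)
  have hb : ∀ i, 1 ≤ i → i ≤ j → ∀ x, |iteratedDeriv i (fun x => r x τ) x|
      ≤ A * Real.exp (-(3 * p - 1) * τ) := fun i h1 h2 x =>
    (hC i h1 τ hτ x).trans (mul_le_mul_of_nonneg_right (hCA i h2) hex0.le)
  have := (key _ (F.sp hτ) (fun x => F.pos x τ hτ) (fun x => hB x τ hτ)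
    (fun i h1 h2 x => (hb i h1 h2 x).trans (mul_le_of_le_one_right hA0 hex1))).2 hj x
  simp only [pow_one] at this
  refine this.trans ?_
  have h3 := sg_le (fun x => r x τ) (i := j) (x := x) (fun i h1 h2 => hb i h1 h2 x)
  calc _ ≤ D * (j * (A * Real.exp (-(3 * p - 1) * τ))) := mul_le_mul_of_nonneg_left h3 hD
    _ = _ := by ring

lemma iter_sub_const (f : ℝ → ℝ) (c : ℝ) {j : ℕ} (hj : 1 ≤ j) :
    iteratedDeriv j (fun x => f x - c) = iteratedDeriv j f := by
  obtain ⟨i, rfl⟩ : ∃ i, j = i + 1 := ⟨j - 1, by omega⟩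
  rw [iteratedDeriv_succ', iteratedDeriv_succ']
  congr 1
  funext x
  exact deriv_sub_const c

lemma RFlow.concl {p : ℕ} (hp : 1 ≤ p) {r : ℝ → ℝ → ℝ} (F : RFlow p r)
    (hh : ∀ l, 1 ≤ l → ∃ M : ℝ, 0 ≤ M ∧ ∀ τ, 0 ≤ τ →
      en l (fun x => r x τ) ≤ M * Real.exp (-(6 * p - 2) * τ))
    {B : ℝ} (hB0 : 0 ≤ B) (hB : ∀ θ τ, 0 ≤ τ → (r θ τ)⁻¹ ≤ B) (l : ℕ) :
    ∃ M > (0:ℝ), ∀ τ : ℝ, 0 ≤ τ → ClNorm l (fun θ => (r θ τ)⁻¹ - mn (fun x => (r x τ)⁻¹))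
      ≤ M * Real.exp (-(3 * (p : ℝ) - 1) * τ) := by
  have key : ∀ j : ℕ, ∃ C : ℝ, 0 ≤ C ∧ ∀ τ, 0 ≤ τ → ∀ x,
      |iteratedDeriv j (fun θ => (r θ τ)⁻¹ - mn (fun x => (r x τ)⁻¹)) x|
        ≤ C * Real.exp (-(3 * p - 1) * τ) := by
    intro j
    rcases Nat.eq_zero_or_pos j with rfl | hj
    · obtain ⟨C, hC, h⟩ := F.sup_u hp hh hB0 hB 1 le_rfl
      refine ⟨2 * Real.pi * C, by positivity, fun τ hτ x => ?_⟩
      rw [iteratedDeriv_zero, abs_sub_comm]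
      have hu := (F.sp hτ).inv (fun x => F.pos x τ hτ)
      refine mn_close hu.cont (fun y => (osc hu y x).trans ?_)
      have := int_le hu.deriv.cont.abs (continuous_const (y := C * Real.exp (-(3 * p - 1) * τ)))
        (fun z => by have := h τ hτ z; rwa [iteratedDeriv_one] at this)
      refine this.trans (le_of_eq ?_)
      rw [intervalIntegral.integral_const]
      simp only [smul_eq_mul, sub_zero]
      ring
    · obtain ⟨C, hC, h⟩ := F.sup_u hp hh hB0 hB j hj
      refine ⟨C, hC, fun τ hτ x => ?_⟩
      rw [iter_sub_const _ _ hj]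
      exact h τ hτ x
  choose C hC0 hC using key
  refine ⟨∑ j ∈ Finset.range (l+1), C j + 1,
    by have := Finset.sum_nonneg (s := Finset.range (l+1)) (fun j _ => hC0 j); linarith,
    fun τ hτ => ?_⟩
  have hs : ∀ j, j < l + 1 → C j ≤ ∑ j ∈ Finset.range (l+1), C j + 1 := fun j hj => by
    have := Finset.single_le_sum (f := C) (fun i _ => hC0 i) (Finset.mem_range.2 hj)
    linarith
  have hs0 : 0 ≤ (∑ j ∈ Finset.range (l+1), C j + 1) * Real.exp (-(3 * (p : ℝ) - 1) * τ) := by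
    have := Finset.sum_nonneg (s := Finset.range (l+1)) (fun j _ => hC0 j)
    positivity
  refine Real.iSup_le (fun j => Real.iSup_le (fun θ => ?_) hs0) hs0
  exact (hC j τ hτ θ).trans (mul_le_mul_of_nonneg_right (hs j j.2) (Real.exp_pos _).le)

lemma init_small {ε0 : ℝ} (hε : 0 < ε0) : ∃ cp > (0:ℝ), ∀ (c : ℝ) (ψ : ℝ → ℝ), 0 < c → SP ψ →
    (∀ x, 0 < ψ x) → cp * seminorm2 ψ ≤ (fCoeff ψ 0).re →
    2 * Real.pi * en 1 (fun x => (c * ψ x)⁻¹) < (ε0 * mn (fun x => (c * ψ x)⁻¹))^2 := by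
  obtain ⟨C, hC, key⟩ := en_le_seminorm2
  set cp := 1 + 2 * Real.pi * C * (4 + 36 / ε0^2) with hcp
  have hcp0 : 0 < cp := by positivity
  refine ⟨cp, hcp0, fun c ψ hc hψ h0 hle => ?_⟩
  have ha : (fCoeff ψ 0).re = mn ψ := by
    rw [fCoeff_zero, Complex.ofReal_re, mn]
  rw [ha] at hle
  have hm := mn_pos hψ.cont h0
  set a := mn ψ with had
  have hS : 0 ≤ seminorm2 ψ := by simpa using (le_seminorm2 hψ 0).1
  have hk := key ψ hψ
  set X := 2 * Real.pi * C with hX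
  have hX0 : 0 < X := by positivity
  have hcp1 : 1 ≤ cp := by
    have : 0 ≤ X * (4 + 36 / ε0^2) := by positivity
    linarith
  have hcp2 : cp ≤ cp^2 := by nlinarith
  have g1 : 4 * X ≤ cp^2 := by
    have : 0 ≤ X * (36 / ε0^2) := by positivity
    nlinarith
  have g2 : 36 * X < ε0^2 * cp^2 := by
    have : ε0^2 * (X * (36 / ε0^2)) = 36 * X := by field_simp
    have h2 : ε0^2 * (1 + X * (36 / ε0^2)) ≤ ε0^2 * cp^2 := by
      refine mul_le_mul_of_nonneg_left (le_trans ?_ hcp2) (by positivity)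
      rw [hcp]; linarith
    have h3 : 0 < ε0^2 := by positivity
    linarith
  have hen : 2 * Real.pi * en 1 ψ * cp^2 ≤ X * a^2 := by
    have : (cp * seminorm2 ψ)^2 ≤ a^2 := pow_le_pow_left₀ (by positivity) hle 2
    calc _ ≤ 2 * Real.pi * (C * seminorm2 ψ^2) * cp^2 := by gcongr
      _ = X * (cp * seminorm2 ψ)^2 := by rw [hX]; ring
      _ ≤ X * a^2 := mul_le_mul_of_nonneg_left this hX0.le
  have hen0 := en_nonneg 1 ψ
  have hcl : ∀ x, |ψ x - a| ≤ a / 2 := by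
    refine close_mean hψ (by positivity) ?_
    have h5 : 0 ≤ 2 * Real.pi * en 1 ψ := by positivity
    have h6 : 0 < cp^2 := by positivity
    have h7 : (2 * Real.pi * en 1 ψ) * cp^2 ≤ (a/2)^2 * cp^2 := by nlinarith
    exact le_of_mul_le_mul_right h7 h6
  have hρ : SP (fun x => c * ψ x) := ⟨contDiff_const.mul hψ.1, fun x => by simp only [hψ.2]⟩
  have hρ0 : ∀ x, 0 < c * ψ x := fun x => mul_pos hc (h0 x)
  have hlow : ∀ x, c * a / 2 ≤ c * ψ x ∧ c * ψ x ≤ 3 / 2 * (c * a) := fun x => by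
    have := abs_le.1 (hcl x)
    constructor <;> nlinarith
  have hd : ∀ x, (iteratedDeriv 1 (fun x => (c * ψ x)⁻¹) x)^2
      ≤ (16 / (c^2 * a^4)) * (iteratedDeriv 1 ψ x)^2 := by
    intro x
    have e := d1_upow hρ hρ0 1 x
    simp only [pow_one] at e
    have e2 : deriv (fun x => c * ψ x) x = c * deriv ψ x := by
      rw [deriv_const_mul _ (hψ.hasDeriv x).differentiableAt]
    rw [e, e2, iteratedDeriv_one]
    have h8 : (c * ψ x)⁻¹ ≤ (c * a / 2)⁻¹ := inv_anti₀ (by positivity) (hlow x).1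
    have h9 : 0 < (c * ψ x)⁻¹ := inv_pos.2 (hρ0 x)
    have h10 : (c * ψ x)⁻¹^4 ≤ (c * a / 2)⁻¹^4 := pow_le_pow_left₀ h9.le h8 4
    calc _ = (c * ψ x)⁻¹^4 * (c^2 * (deriv ψ x)^2) := by push_cast; ring
      _ ≤ (c * a / 2)⁻¹^4 * (c^2 * (deriv ψ x)^2) :=
        mul_le_mul_of_nonneg_right h10 (by positivity)
      _ = _ := by field_simp; ring
  have hu := hρ.inv hρ0
  have hE : en 1 (fun x => (c * ψ x)⁻¹) ≤ 16 / (c^2 * a^4) * en 1 ψ := by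
    rw [en, en, ← intervalIntegral.integral_const_mul]
    exact int_le ((hu.iter 1).cont.pow 2) (continuous_const.mul ((hψ.iter 1).cont.pow 2)) hd
  have hM : (3 / 2 * (c * a))⁻¹ ≤ mn (fun x => (c * ψ x)⁻¹) := by
    have := int_le (f := fun _ => (3 / 2 * (c * a))⁻¹) continuous_const hu.cont
      (fun x => inv_anti₀ (hρ0 x) (hlow x).2)
    rw [mn, ← div_eq_inv_mul, le_div_iff₀ (by positivity)]
    rw [intervalIntegral.integral_const] at this
    simp only [smul_eq_mul, sub_zero] at this
    linarith
  have hM2 : (ε0 * (3 / 2 * (c * a))⁻¹)^2 ≤ (ε0 * mn (fun x => (c * ψ x)⁻¹))^2 := by gcongr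
  refine lt_of_lt_of_le ?_ hM2
  have h11 : 2 * Real.pi * en 1 (fun x => (c * ψ x)⁻¹)
      ≤ 16 / (c^2 * a^4) * (2 * Real.pi * en 1 ψ) := by
    have := mul_le_mul_of_nonneg_left hE (show 0 ≤ 2 * Real.pi by positivity)
    linarith
  have h12 : 16 / (c^2 * a^4) * (2 * Real.pi * en 1 ψ) * cp^2 ≤ 16 / (c^2 * a^4) * (X * a^2) := by
    rw [mul_assoc]
    exact mul_le_mul_of_nonneg_left hen (by positivity)
  have h13 : 16 / (c^2 * a^4) * (X * a^2) < (ε0 * (3 / 2 * (c * a))⁻¹)^2 * cp^2 := by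
    have e1 : 16 / (c^2 * a^4) * (X * a^2) = (4 / 9 / (c^2 * a^2)) * (36 * X) := by
      field_simp; norm_num
    have e2 : (ε0 * (3 / 2 * (c * a))⁻¹)^2 * cp^2 = (4 / 9 / (c^2 * a^2)) * (ε0^2 * cp^2) := by
      field_simp; norm_num
    rw [e1, e2]
    exact mul_lt_mul_of_pos_left g2 (by positivity)
  have h14 : 0 < cp^2 := by positivity
  exact lt_of_le_of_lt h11 (lt_of_mul_lt_mul_right (h12.trans_lt h13) h14.le)

lemma lam_ex {p : ℕ} (hp : 1 ≤ p) {T : ℝ} (hT : 0 < T) : ∃ c : ℝ, 0 < c ∧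
    c^(p+1) = ((p:ℝ)+1)/p * T ∧ ∀ (k : ℝ → ℝ → ℝ) (θ τ : ℝ),
      ktilde p T k θ τ = c * Real.exp (-τ) * k θ (tOf p T τ) := by
  have hp1 : (0:ℝ) < p := by exact_mod_cast hp
  have hq : (0:ℝ) < (p:ℝ)+1 := by positivity
  refine ⟨(((p:ℝ)+1)/p * T) ^ ((1:ℝ)/((p:ℝ)+1)), by positivity, ?_, fun k θ τ => ?_⟩
  · rw [← Real.rpow_natCast, ← Real.rpow_mul (by positivity)]
    push_cast
    rw [one_div_mul_cancel hq.ne', Real.rpow_one]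
  · rw [ktilde]
    have h1 : T - tOf p T τ = T * Real.exp (-((p : ℝ) + 1) * τ) := by rw [tOf]; ring
    have h2 : Real.exp (-((p : ℝ) + 1) * τ) ^ ((1:ℝ)/((p:ℝ)+1)) = Real.exp (-τ) := by
      rw [← Real.exp_mul]
      congr 1
      field_simp
    rw [h1, Real.mul_rpow hT.le (Real.exp_pos _).le, h2,
      Real.mul_rpow (by positivity) hT.le]
    ring

lemma tOf_mem (p : ℕ) {T : ℝ} (hT : 0 < T) {τ : ℝ} (h : 0 ≤ τ) : tOf p T τ ∈ Set.Ico (0:ℝ) T := by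
  have h1 : Real.exp (-((p : ℝ) + 1) * τ) ≤ 1 := by
    rw [Real.exp_le_one_iff]
    have : 0 ≤ ((p:ℝ)+1) * τ := by positivity
    linarith
  have h2 := Real.exp_pos (-((p : ℝ) + 1) * τ)
  rw [tOf]
  constructor
  · exact mul_nonneg hT.le (by linarith)
  · nlinarith

lemma tOf_tendsto (p : ℕ) {T : ℝ} (hT : 0 < T) :
    Filter.Tendsto (tOf p T) Filter.atTop (nhdsWithin T (Set.Iio T)) := by
  refine tendsto_nhdsWithin_iff.2 ⟨?_, ?_⟩
  · have h1 : Filter.Tendsto (fun τ : ℝ => -((p : ℝ) + 1) * τ) Filter.atTop Filter.atBot :=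
      Filter.tendsto_id.const_mul_atTop_of_neg (by have : (0:ℝ) ≤ p := by positivity
                                                   linarith)
    have h2 := Real.tendsto_exp_atBot.comp h1
    have h3 := (h2.const_sub 1).const_mul T
    rw [sub_zero, mul_one] at h3
    exact h3
  · filter_upwards [Filter.eventually_ge_atTop 0] with τ h
    exact (tOf_mem p hT h).2

lemma d2_pow {f : ℝ → ℝ} (hf : SP f) (lam : ℝ) (m : ℕ) (x : ℝ) :
    iteratedDeriv 2 (fun x => (lam * f x)^(m+1)) x
      = lam^(m+1) * ((m+1) * (m * f x^(m-1) * (deriv f x)^2 + f x^m * deriv (deriv f) x)) := by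
  have h1 : deriv (fun x => (lam * f x)^(m+1)) = fun x => lam^(m+1) * (m+1) * (f x^m * deriv f x) := by
    funext y
    have := ((hf.hasDeriv y).const_mul lam).pow (m+1)
    refine (this.deriv).trans ?_
    simp only [Nat.add_sub_cancel]
    push_cast
    ring
  rw [iteratedDeriv_succ, iteratedDeriv_one, h1]
  have := (((hf.hasDeriv x).pow m).mul (hf.deriv.hasDeriv x)).const_mul (lam^(m+1) * ((m:ℝ)+1))
  refine (this.deriv).trans ?_
  simp only [Pi.pow_apply]
  ring

lemma coeff_pm {g : ℝ → ℝ} (h : (∫ θ in (0:ℝ)..(2 * Real.pi), Complex.exp (Complex.I * θ) / (g θ)) = 0)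
    (c : ℝ) : fCoeff (fun x => (c * g x)⁻¹) 1 = 0 ∧ fCoeff (fun x => (c * g x)⁻¹) (-1) = 0 := by
  have h2 : (∫ θ in (0:ℝ)..(2 * Real.pi), Complex.exp (-(Complex.I * θ)) / (g θ)) = 0 := by
    have h3 := congrArg (starRingEnd ℂ) h
    rw [intervalIntegral.integral_of_le (by positivity), ← integral_conj, map_zero] at h3
    rw [intervalIntegral.integral_of_le (by positivity), ← h3]
    congr 1
    funext θ
    rw [map_div₀, ← Complex.exp_conj]
    simp
  constructor
  · rw [fCoeff]
    have : ∀ θ : ℝ, (((c * g θ)⁻¹ : ℝ) : ℂ) * Complex.exp (-(Complex.I * (1:ℤ) * θ))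
        = (c:ℂ)⁻¹ * (Complex.exp (-(Complex.I * θ)) / (g θ)) := fun θ => by
      push_cast
      rw [mul_inv, mul_one]
      ring
    simp only [this]
    rw [intervalIntegral.integral_const_mul, h2]; simp
  · rw [fCoeff]
    have : ∀ θ : ℝ, (((c * g θ)⁻¹ : ℝ) : ℂ) * Complex.exp (-(Complex.I * (-1:ℤ) * θ))
        = (c:ℂ)⁻¹ * (Complex.exp (Complex.I * θ) / (g θ)) := fun θ => by
      push_cast
      rw [mul_inv, show -(Complex.I * -1 * (θ:ℂ)) = Complex.I * θ by ring]
      ring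
    simp only [this]
    rw [intervalIntegral.integral_const_mul, h]; simp

lemma toRFlow {p : ℕ} (hp : 1 ≤ p) {T : ℝ} (hT : 0 < T) {k : ℝ → ℝ → ℝ} {ψ : ℝ → ℝ}
    (H : IsPCSF p T k ψ) {c : ℝ} (hc : 0 < c) (hcp : c^(p+1) = ((p:ℝ)+1)/p * T) :
    RFlow p (fun θ τ => (c * Real.exp (-τ) * k θ (tOf p T τ))⁻¹) := by
  obtain ⟨hs, hper, hpos, hpde, h0, hψ1, hψ2, hψ3, hbl, hclo⟩ := H
  have hp1 : (0:ℝ) < p := by exact_mod_cast hp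
  have hup : ∀ θ τ, 0 ≤ τ → 0 < c * Real.exp (-τ) * k θ (tOf p T τ) := fun θ τ h =>
    mul_pos (by positivity) (hpos θ _ (tOf_mem p hT h))
  have hksm : SM (fun θ τ => k θ (tOf p T τ)) := by
    have h1 : ContDiff ℝ (⊤ : ℕ∞) (fun q : ℝ × ℝ => ((q.1, tOf p T q.2) : ℝ × ℝ)) := by
      unfold tOf; fun_prop
    exact ContDiffOn.comp hs h1.contDiffOn (fun q hq => ⟨Set.mem_univ _, tOf_mem p hT hq.2⟩)
  have hlsm : SM (fun _ τ => c * Real.exp (-τ)) := by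
    have h1 : ContDiff ℝ (⊤ : ℕ∞) (fun q : ℝ × ℝ => c * Real.exp (-q.2)) := by fun_prop
    exact h1.contDiffOn
  have husm := hlsm.mul hksm
  refine ⟨husm.inv hup, fun θ τ => by simp only [hper], fun θ τ h => inv_pos.2 (hup θ τ h), ?_,
    fun τ h => (coeff_pm (hclo _ (tOf_mem p hT h)) _).1,
    fun τ h => (coeff_pm (hclo _ (tOf_mem p hT h)) _).2, ?_⟩
  · intro θ τ h
    have hmem := tOf_mem p hT h.le
    have hsp : SP (fun x => k x (tOf p T τ)) := ⟨hksm.slice h.le, fun x => hper x _⟩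
    have hk0 := hpos θ _ hmem
    have hlam : HasDerivAt (fun s => c * Real.exp (-s)) (-(c * Real.exp (-τ))) τ := by
      have := ((hasDerivAt_id τ).neg.exp).const_mul c
      simpa using this
    have ht : HasDerivAt (tOf p T) (p * (c * Real.exp (-τ))^(p+1)) τ := by
      have h1 := ((((hasDerivAt_id τ).const_mul (-((p:ℝ)+1))).exp).const_sub 1).const_mul T
      refine h1.congr_deriv ?_
      rw [mul_pow, hcp, ← Real.exp_nat_mul]
      simp only [id]
      rw [show ((p+1:ℕ):ℝ) * -τ = -((p:ℝ)+1) * τ by push_cast; ring]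
      field_simp
    have hkt := (hpde θ _ hmem).comp τ ht
    have hu := (hlam.mul hkt).inv (hup θ τ h.le).ne'
    refine hu.congr_deriv ?_
    have e : (fun x => ((c * Real.exp (-τ) * k x (tOf p T τ))⁻¹)⁻¹^p)
        = fun x => (c * Real.exp (-τ) * k x (tOf p T τ))^p := by
      funext x; rw [inv_inv]
    simp only [e, Function.comp_apply, Pi.mul_apply, inv_inv]
    have hl0 : 0 < c * Real.exp (-τ) := by positivity
    clear hu hkt ht hlam e
    obtain ⟨m, rfl⟩ : ∃ m, p = m + 1 := ⟨p - 1, by omega⟩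
    rw [d2_pow hsp]
    generalize c * Real.exp (-τ) = lam at *
    set t := tOf (m+1) T τ
    generalize deriv (deriv fun x => k x t) θ = k2 at *
    generalize deriv (fun x => k x t) θ = k1 at *
    generalize k θ t = kk at *
    simp only [Nat.add_sub_cancel, show m + 1 - 2 = m - 1 by omega]
    push_cast at hp1 ⊢
    generalize kk^(m-1) = w
    field_simp
    ring
  · intro M
    have h1 := (hbl.comp (tOf_tendsto p hT)).eventually_gt_atTop (M / c)
    obtain ⟨τ0, h2⟩ := Filter.eventually_atTop.1 h1
    refine ⟨τ0, fun τ hτ => ?_⟩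
    have h3 := h2 τ hτ
    simp only [Function.comp_apply] at h3
    haveI : Nonempty (Set.Icc (0:ℝ) (2 * Real.pi)) := ⟨⟨0, le_rfl, by positivity⟩⟩
    obtain ⟨θ, h4⟩ := exists_lt_of_lt_ciSup h3
    refine ⟨θ, ?_⟩
    rw [inv_inv]
    have h5 : Real.exp τ * Real.exp (-τ) = 1 := by rw [← Real.exp_add]; simp
    have h6 : Real.exp τ * (c * Real.exp (-τ) * k θ (tOf p T τ)) = c * k θ (tOf p T τ) := by
      calc _ = (Real.exp τ * Real.exp (-τ)) * (c * k θ (tOf p T τ)) := by ring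
        _ = _ := by rw [h5, one_mul]
    rw [h6]
    rw [div_lt_iff₀ hc] at h4
    linarith

/-- There is `c_p > 0` depending only on `p` such that if `ψ̂(0) ≥ c_p ‖ψ‖₂`,
then for every `l` there is `M_{p,l} > 0` with
`‖k̃(·,τ) - ũ(0,τ)‖_{C^l[0,2π]} ≤ M_{p,l} e^{-(3p-1)τ}` for all `τ ≥ 0`, where
`ũ(0,τ) = (1/2π)∫₀^{2π} k̃(θ,τ) dθ`. -/
theorem statement13 (p : ℕ) (hp : 1 ≤ p) :
    ∃ cp > (0:ℝ), ∀ (T : ℝ), 0 < T → ∀ (k : ℝ → ℝ → ℝ) (ψ : ℝ → ℝ),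
      IsPCSF p T k ψ →
      cp * seminorm2 ψ ≤ (fCoeff ψ 0).re →
      ∀ l : ℕ, ∃ M > (0:ℝ), ∀ τ : ℝ, 0 ≤ τ →
        ClNorm l (fun θ => ktilde p T k θ τ
            - (1 / (2 * Real.pi)) * ∫ x in (0:ℝ)..(2 * Real.pi), ktilde p T k x τ)
          ≤ M * Real.exp (-(3 * (p : ℝ) - 1) * τ) := by
  obtain ⟨ε0, hε, hmain⟩ := RFlow.main1 p hp
  obtain ⟨cp, hcp, hinit⟩ := init_small hε
  refine ⟨cp, hcp, fun T hT k ψ H hle l => ?_⟩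
  obtain ⟨c, hc, hc1, hkt⟩ := lam_ex hp hT
  have F := toRFlow hp hT H hc hc1
  obtain ⟨hs, hper, hpos, hpde, h0, hψ1, hψ2, hψ3, hbl, hclo⟩ := H
  have hz : ∀ x, c * Real.exp (-0) * k x (tOf p T 0) = c * ψ x := fun x => by
    have : tOf p T 0 = 0 := by simp [tOf]
    rw [this, h0]; simp
  have hi := hinit c ψ hc ⟨hψ1, hψ3⟩ hψ2 hle
  obtain ⟨h1, b, B, hb, hB⟩ := hmain _ F (by simp only [hz]; exact hi)
  have hh := fun l => F.higher hp h1 hb hB l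
  have hB0 : 0 ≤ B := by
    have := hB 0 0 le_rfl
    linarith [this.1, this.2]
  obtain ⟨M, hM, h2⟩ := F.concl hp hh hB0 (fun θ τ h => (hB θ τ h).2) l
  refine ⟨M, hM, fun τ hτ => ?_⟩
  have h3 := h2 τ hτ
  simp only [inv_inv, ← hkt, mn] at h3
  rw [one_div]
  exact h3
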